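/- Let C > 0 be a constant. For every η > 0 there is n_0 such that for all n ≥ n_0 the following holds: for every m ≤ Cn, every deterministic online strategy of Builder for the first m steps, and every realization of e_1, …, e_m for which Y_m ∪ Z_m ≠ ∅ and the maximum degree of G_{n,m} is at most 10·log n, if for each j ≥ m+1 Builder purchases e_j if and only if at least one endpoint of e_j is isolated in B_{j−1}, then the conditional probability (given e_1, …, e_m) that B_{τ_1} has no isolated vertex is at least (1 − η)·|Z_m| / (|Y_m| + |Z_m|). -/

import Mathlib

open Finset Filter

namespace RGP

/-- Number of edges of the complete graph on `n` vertices. -/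
def numEdges (n : ℕ) : ℕ := n * (n - 1) / 2

/-- An edge of the complete graph on `Fin n` (an unordered pair of distinct vertices). -/
abbrev EdgeType (n : ℕ) := {e : Sym2 (Fin n) // ¬ e.IsDiag}

/-- A uniformly random permutation of the edges of `K_n` is modelled by a bijection
`σ` between positions `Fin (numEdges n)` and edges; `σ i` is the edge `e_{i+1}`. -/
abbrev Ord (n : ℕ) := Fin (numEdges n) ≃ EdgeType n

/-- Degree of a vertex `v` in a set `S` of edges. -/
def deg {n : ℕ} (S : Finset (Sym2 (Fin n))) (v : Fin n) : ℕ :=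
  (S.filter (fun e => v ∈ e)).card

/-- The edge set `{e_1, …, e_m}` of `G_{n,m}` in the random graph process `σ`. -/
def procEdges {n : ℕ} (σ : Ord n) (m : ℕ) : Finset (Sym2 (Fin n)) :=
  (Finset.univ.filter (fun i : Fin (numEdges n) => (i : ℕ) < m)).image (fun i => (σ i).1)

/-- The hitting time `τ_k` for minimum degree at least `k`. -/
noncomputable def tau {n : ℕ} (k : ℕ) (σ : Ord n) : ℕ :=
  sInf {m | ∀ v : Fin n, k ≤ deg (procEdges σ m) v}

open scoped Classical in
/-- The probability of an event under the uniformly random edge ordering. -/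
noncomputable def Pr {n : ℕ} (p : Ord n → Prop) : ℝ :=
  ((Finset.univ : Finset (Ord n)).filter p).card / (Fintype.card (Ord n) : ℝ)

/-- A deterministic online strategy: given the sequence of edges revealed so far
(the last entry being the edge just revealed), decide whether to purchase it. -/
abbrev Strategy (n : ℕ) := List (Sym2 (Fin n)) → Bool

/-- The list of the first `i` revealed edges `e_1, …, e_i`. -/
def prefixList {n : ℕ} (σ : Ord n) (i : ℕ) : List (Sym2 (Fin n)) :=
  (List.range i).filterMap (fun j => if h : j < numEdges n then some (σ ⟨j, h⟩).1 else none)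

/-- `buy st σ i` is the edge set of Builder's graph `B_i`: the edges purchased by the
strategy `st` among `e_1, …, e_i`. -/
def buy {n : ℕ} (st : Strategy n) (σ : Ord n) : ℕ → Finset (Sym2 (Fin n))
  | 0 => ∅
  | i + 1 =>
    if h : i < numEdges n then
      if st (prefixList σ (i + 1)) then insert (σ ⟨i, h⟩).1 (buy st σ i)
      else buy st σ i
    else buy st σ i

end RGP

namespace RGP

/-- Builder's purchased edge set, as determined by the strategy `st`, after the list `L`
of edges has been revealed (the decision about the `i`-th edge depends on the prefix of
length `i`). -/
def buyList {n : ℕ} (st : Strategy n) (L : List (Sym2 (Fin n))) : Finset (Sym2 (Fin n)) :=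
  ((List.range L.length).filterMap
    (fun i => if st (L.take (i + 1)) then L[i]? else none)).toFinset

/-- Conditional probability of `p` given `q` under the uniformly random edge ordering. -/
noncomputable def CondPr {n : ℕ} (p q : Ord n → Prop) : ℝ :=
  Pr (fun σ => p σ ∧ q σ) / Pr q

end RGP

/-!
Let `U = Y_m ∪ Z_m`, and call critical the edge after whose arrival every vertex of `U` has been
touched by a new edge. If a vertex of `Z_m` is still untouched just before the critical edge, then
the critical edge arrives no later than step `τ_1`, so that the greedy Builder has covered all of
`U`, and hence all vertices, by then. Divide one unit equally among the vertices of `U` that are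
touched last. The expected shares of the vertices of `U` add up to `1`, and the total expected share
of `Z_m` is a lower bound for the probability in question. So it suffices that no `y ∈ U` has an
expected share noticeably larger than that of some `z ∈ Z_m`.

Exchanging `y` and `z` maps the orders in which `y` is among the last to orders in which `z` is,
unless the edges preceding the critical one meet the set `D` of unrevealed edges whose image is
already revealed. The size of `D` is at most the degree of `y` in `G_{n,m}`, which is `o(√n)`. With
independent uniform arrival times, the edges that have arrived by time `t` form a binomial random
subset. By Harris' inequality, the probability that it covers a set of vertices and contains a given
edge is small compared with the probability that it covers the set. Where this bound is too weak, a
union bound over `D` suffices, and integrating over `t` leaves an error that is small even after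
summing over the `n` vertices.
-/

namespace RGP

/-! ### Initial segments of a random order -/

lemma integral_pow_mul_one_sub_pow (a b : ℕ) :
    ∫ t in (0 : ℝ)..1, t ^ a * (1 - t) ^ b = a.factorial * b.factorial / (a + b + 1).factorial := by
  have hsum : (a + 1 + (b + 1) : ℝ) = (a + b + 1 : ℕ) + 1 := by push_cast; ring
  have hcast : ((∫ t in (0 : ℝ)..1, t ^ a * (1 - t) ^ b : ℝ) : ℂ) =
      Complex.betaIntegral (a + 1 : ℝ) (b + 1 : ℝ) := by
    rw [Complex.betaIntegral, ← intervalIntegral.integral_ofReal]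
    simp
  rw [← Complex.ofReal_re (∫ t in (0 : ℝ)..1, t ^ a * (1 - t) ^ b), hcast,
    ← ProbabilityTheory.beta_eq_betaIntegralReal _ _ (by positivity) (by positivity),
    ProbabilityTheory.beta, hsum, Real.Gamma_nat_eq_factorial, Real.Gamma_nat_eq_factorial,
    Real.Gamma_nat_eq_factorial]

lemma integral_one_sub_pow (b : ℕ) : ∫ t in (0 : ℝ)..1, (1 - t) ^ b = 1 / (b + 1) := by
  have hbeta := integral_pow_mul_one_sub_pow 0 b
  simp only [pow_zero, one_mul] at hbeta
  rw [hbeta, zero_add, Nat.factorial_succ]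
  have := b.factorial_ne_zero
  push_cast
  field_simp
  simp

lemma integral_sq_mul_one_sub_pow (b : ℕ) :
    ∫ t in (0 : ℝ)..1, t ^ 2 * (1 - t) ^ b = 2 / ((b + 1) * (b + 2) * (b + 3) : ℝ) := by
  rw [integral_pow_mul_one_sub_pow, show 2 + b + 1 = b + 3 by ring, Nat.factorial_succ (b + 2),
    Nat.factorial_succ (b + 1), Nat.factorial_succ b]
  have := b.factorial_ne_zero
  push_cast
  field_simp
  ring

lemma integral_one_sub_pow_mul_add_sq_le {b : ℕ} {h : ℝ} (hh : 0 < h) (hhb : h ≤ b + 1) :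
    ∫ t in (0 : ℝ)..1, (1 - t) ^ b * (1 / h ^ 2 + t ^ 2) ≤ 3 / (h ^ 2 * (b + 1)) := by
  have hsq : h ^ 2 ≤ (b + 2) * (b + 3) := by nlinarith
  calc ∫ t in (0 : ℝ)..1, (1 - t) ^ b * (1 / h ^ 2 + t ^ 2)
      = ∫ t in (0 : ℝ)..1, (1 / h ^ 2 * (1 - t) ^ b + t ^ 2 * (1 - t) ^ b) := by
        congr! 2 with t
        ring
    _ = 1 / h ^ 2 * (1 / (b + 1)) + 2 / ((b + 1) * (b + 2) * (b + 3)) := by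
        rw [intervalIntegral.integral_add (Continuous.intervalIntegrable (by fun_prop) _ _)
          (Continuous.intervalIntegrable (by fun_prop) _ _), intervalIntegral.integral_const_mul,
          integral_one_sub_pow, integral_sq_mul_one_sub_pow]
    _ ≤ 1 / h ^ 2 * (1 / (b + 1)) + 2 / ((b + 1) * h ^ 2) := by
        rw [mul_assoc]
        gcongr
    _ = 3 / (h ^ 2 * (b + 1)) := by
        field_simp
        norm_num

/-- The probability that a uniformly random order of an `r`-element set starts with the elements
of a given `k`-element subset, in any order, followed by a given element outside it. The value for
`r ≤ k` is `0`. -/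
noncomputable def prefixProb (r k : ℕ) : ℝ := ((r.choose k * (r - k) : ℕ) : ℝ)⁻¹

lemma prefixProb_nonneg (r k : ℕ) : 0 ≤ prefixProb r k := inv_nonneg.2 (Nat.cast_nonneg _)

-- Give the elements independent uniform arrival times; `t` is the time of the given element.
lemma prefixProb_eq_integral {r k : ℕ} (hk : k < r) :
    prefixProb r k = ∫ t in (0 : ℝ)..1, t ^ k * (1 - t) ^ (r - 1 - k) := by
  obtain ⟨b, rfl⟩ := Nat.exists_eq_add_of_lt hk
  have hchoose := Nat.choose_mul_factorial_mul_factorial hk.le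
  rw [show k + b + 1 - k = b + 1 by omega, Nat.factorial_succ] at hchoose
  have hpos : (k + b + 1).choose k ≠ 0 := (Nat.choose_pos hk.le).ne'
  rw [integral_pow_mul_one_sub_pow, prefixProb, show k + b + 1 - 1 - k = b by omega,
    show k + b + 1 - k = b + 1 by omega, ← hchoose]
  push_cast
  field_simp

/-! ### Binomial random subsets -/

section SubsetProb

variable {E : Type*} {Q S : Finset E} {t : ℝ} {p q : Finset E → Prop}

open scoped Classical in
/-- The probability that the random subset of `Q` containing each element independently with
probability `t` has the property `p`. -/
noncomputable def subsetProb (Q : Finset E) (t : ℝ) (p : Finset E → Prop) : ℝ :=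
  ∑ F ∈ Q.powerset with p F, t ^ #F * (1 - t) ^ (#Q - #F)

lemma subsetWeight_nonneg (ht : t ∈ Set.Icc 0 1) (i j : ℕ) : 0 ≤ t ^ i * (1 - t) ^ j :=
  mul_nonneg (pow_nonneg ht.1 i) (pow_nonneg (sub_nonneg.2 ht.2) j)

lemma subsetProb_true (Q : Finset E) (t : ℝ) : subsetProb Q t (fun _ => True) = 1 := by
  simp [subsetProb, sum_pow_mul_eq_add_pow]

lemma subsetProb_nonneg (ht : t ∈ Set.Icc 0 1) : 0 ≤ subsetProb Q t p :=
  sum_nonneg fun _ _ => subsetWeight_nonneg ht _ _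

lemma subsetProb_mono (ht : t ∈ Set.Icc 0 1) (hpq : ∀ F ⊆ Q, p F → q F) :
    subsetProb Q t p ≤ subsetProb Q t q := by
  classical
  refine sum_le_sum_of_subset_of_nonneg (fun F hF => ?_) fun _ _ _ => subsetWeight_nonneg ht _ _
  rw [mem_filter, mem_powerset] at hF ⊢
  exact ⟨hF.1, hpq F hF.1 hF.2⟩

lemma subsetProb_le_one (ht : t ∈ Set.Icc 0 1) : subsetProb Q t p ≤ 1 :=
  (subsetProb_mono ht fun _ _ _ => trivial).trans_eq (subsetProb_true Q t)

lemma subsetProb_add_subsetProb_not (Q : Finset E) (t : ℝ) (p : Finset E → Prop) :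
    subsetProb Q t p + subsetProb Q t (fun F => ¬ p F) = 1 := by
  classical
  rw [← subsetProb_true Q t, subsetProb, subsetProb, subsetProb, filter_true]
  convert sum_filter_add_sum_filter_not Q.powerset p _

lemma subsetProb_exists_le {ι : Type*} (ht : t ∈ Set.Icc 0 1) (D : Finset ι)
    (p : ι → Finset E → Prop) :
    subsetProb Q t (fun F => ∃ i ∈ D, p i F) ≤ ∑ i ∈ D, subsetProb Q t (p i) := by
  classical
  simp only [subsetProb, sum_filter]
  rw [sum_comm]
  refine sum_le_sum fun F _ => ?_
  have hweight : 0 ≤ t ^ #F * (1 - t) ^ (#Q - #F) := subsetWeight_nonneg ht _ _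
  have hnonneg : ∀ i ∈ D, 0 ≤ if p i F then t ^ #F * (1 - t) ^ (#Q - #F) else 0 :=
    fun i _ => by split_ifs <;> simp [hweight]
  split_ifs with hF
  · obtain ⟨i, hi, hpi⟩ := hF
    exact (if_pos hpi).ge.trans (single_le_sum hnonneg hi)
  · exact sum_nonneg hnonneg

lemma continuous_subsetProb (Q : Finset E) (p : Finset E → Prop) :
    Continuous fun t => subsetProb Q t p := by
  unfold subsetProb
  fun_prop

lemma subsetWeight_mul_eq_inter_union [DecidableEq E] {F G : Finset E} (hF : F ⊆ Q)
    (hG : G ⊆ Q) (t : ℝ) :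
    t ^ #F * (1 - t) ^ (#Q - #F) * (t ^ #G * (1 - t) ^ (#Q - #G)) =
      t ^ #(F ∩ G) * (1 - t) ^ (#Q - #(F ∩ G)) * (t ^ #(F ∪ G) * (1 - t) ^ (#Q - #(F ∪ G))) := by
  have hcard := card_union_add_card_inter F G
  have hF' := card_le_card hF
  have hG' := card_le_card hG
  have hunion := card_le_card (union_subset hF hG)
  have hinter := card_le_card (inter_subset_left.trans hF : F ∩ G ⊆ Q)
  rw [mul_mul_mul_comm, ← pow_add, ← pow_add, mul_mul_mul_comm, ← pow_add, ← pow_add]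
  congr 2 <;> omega

-- Harris' inequality, as the case of the four functions theorem in which the two factors on the
-- right are the total weight and the weight of the joint event.
lemma subsetProb_mul_le_and (ht : t ∈ Set.Icc 0 1) (hp : Monotone p) (hq : Monotone q) :
    subsetProb Q t p * subsetProb Q t q ≤ subsetProb Q t (fun F => p F ∧ q F) := by
  classical
  let weight (p : Finset E → Prop) (F : Finset E) : ℝ :=
    if F ⊆ Q ∧ p F then t ^ #F * (1 - t) ^ (#Q - #F) else 0
  have hweight (p F) : 0 ≤ weight p F := by
    simp only [weight]
    split_ifs <;> simp [subsetWeight_nonneg ht]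
  have hsum (p) : ∑ F ∈ Q.powerset, weight p F = subsetProb Q t p := by
    rw [subsetProb, sum_filter]
    exact sum_congr rfl fun F hF => by simp [weight, mem_powerset.1 hF]
  have hlattice (F G : Finset E) :
      weight p F * weight q G ≤ weight (fun _ => True) (F ⊓ G) *
        weight (fun F => p F ∧ q F) (F ⊔ G) := by
    by_cases h : (F ⊆ Q ∧ p F) ∧ (G ⊆ Q ∧ q G)
    · obtain ⟨hF, hG⟩ := h
      have hsup : F ⊔ G ⊆ Q ∧ p (F ⊔ G) ∧ q (F ⊔ G) :=
        ⟨union_subset hF.1 hG.1, hp le_sup_left hF.2, hq le_sup_right hG.2⟩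
      have hinf : F ⊓ G ⊆ Q ∧ True := ⟨inter_subset_left.trans hF.1, trivial⟩
      simp only [weight]
      rw [if_pos hF, if_pos hG, if_pos hsup, if_pos hinf]
      exact (subsetWeight_mul_eq_inter_union hF.1 hG.1 t).le
    · have hzero : weight p F * weight q G = 0 := by
        rw [not_and_or] at h
        exact mul_eq_zero.2 (h.imp (fun h => if_neg h) fun h => if_neg h)
      rw [hzero]
      exact mul_nonneg (hweight (fun _ => True) _) (hweight (fun F => p F ∧ q F) _)
  have hfour := four_functions_theorem (weight p) (weight q) (weight fun _ => True)
    (weight fun F => p F ∧ q F) (hweight p) (hweight q) (hweight _) (hweight _) hlattice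
    Q.powerset Q.powerset
  rwa [powerset_infs_powerset_self, powerset_sups_powerset_self, hsum, hsum, hsum, hsum,
    subsetProb_true, one_mul] at hfour

lemma subsetProb_mem_and_erase [DecidableEq E] {f : E} (hf : f ∈ Q) (p : Finset E → Prop) :
    subsetProb Q t (fun F => f ∈ F ∧ p (F.erase f)) =
      t * subsetProb Q t (fun F => p (F.erase f)) := by
  classical
  obtain ⟨Q', hfQ', rfl⟩ : ∃ Q', f ∉ Q' ∧ insert f Q' = Q :=
    ⟨Q.erase f, notMem_erase f Q, insert_erase hf⟩
  simp only [subsetProb, sum_filter, sum_powerset_insert hfQ', mul_add, mul_sum]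
  rw [← sum_add_distrib, ← sum_add_distrib]
  refine sum_congr rfl fun F hF => ?_
  have hFQ' := mem_powerset.1 hF
  have hfF : f ∉ F := fun h => hfQ' (hFQ' h)
  have hcard := card_le_card hFQ'
  simp only [hfF, mem_insert_self, erase_insert hfF, erase_eq_of_notMem hfF, false_and, true_and,
    card_insert_of_notMem hfQ', card_insert_of_notMem hfF, if_false, zero_add]
  split_ifs
  · rw [Nat.add_sub_add_right, Nat.sub_add_comm hcard]
    ring
  · ring

lemma subsetProb_mem_le (ht : t ∈ Set.Icc 0 1) {f : E} (hf : f ∈ Q) :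
    subsetProb Q t (fun F => f ∈ F) ≤ t := by
  classical
  have hmem := subsetProb_mem_and_erase (t := t) hf fun _ => True
  simp only [and_true] at hmem
  rw [hmem]
  exact mul_le_of_le_one_right ht.1 (subsetProb_le_one ht)

lemma subsetProb_and_not_disjoint_le (ht : t ∈ Set.Icc 0 1) (hS : S ⊆ Q)
    (p : Finset E → Prop) :
    subsetProb Q t (fun F => p F ∧ ¬ Disjoint F S) ≤ #S * t := by
  calc subsetProb Q t (fun F => p F ∧ ¬ Disjoint F S)
      ≤ subsetProb Q t (fun F => ∃ f ∈ S, f ∈ F) := subsetProb_mono ht fun F _ ⟨_, hFS⟩ =>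
        (not_disjoint_iff.1 hFS).imp fun _ => And.symm
    _ ≤ ∑ f ∈ S, subsetProb Q t (fun F => f ∈ F) := subsetProb_exists_le ht S fun f F => f ∈ F
    _ ≤ ∑ _f ∈ S, t := sum_le_sum fun f hf => subsetProb_mem_le ht (hS hf)
    _ = #S * t := by rw [sum_const, nsmul_eq_mul]

lemma monotone_not_disjoint (S : Finset E) : Monotone fun F => ¬ Disjoint F S :=
  fun _ _ hFG hF hG => hF (hG.mono_left hFG)

lemma subsetProb_disjoint (hS : S ⊆ Q) (t : ℝ) :
    subsetProb Q t (fun F => Disjoint F S) = (1 - t) ^ #S := by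
  classical
  have hdisj : ∀ F, F ∈ {F ∈ Q.powerset | Disjoint F S} ↔ F ∈ (Q \ S).powerset := fun F => by
    rw [mem_filter, mem_powerset, mem_powerset, subset_sdiff]
  have htotal := subsetProb_true (Q \ S) t
  rw [subsetProb, filter_true] at htotal
  calc subsetProb Q t (fun F => Disjoint F S)
      = ∑ F ∈ (Q \ S).powerset, (1 - t) ^ #S * (t ^ #F * (1 - t) ^ (#(Q \ S) - #F)) := by
        refine sum_congr (by ext F; rw [← hdisj]; simp) fun F hF => ?_
        have hFcard := card_le_card (mem_powerset.1 hF)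
        have hScard := card_sdiff_add_card_eq_card hS
        rw [show #Q - #F = #S + (#(Q \ S) - #F) by omega, pow_add]
        ring
    _ = (1 - t) ^ #S := by rw [← mul_sum, htotal, mul_one]

lemma one_sub_pow_mul_one_add_le_one (ht : t ∈ Set.Icc 0 1) (k : ℕ) :
    (1 - t) ^ k * (1 + k * t) ≤ 1 := by
  obtain ⟨ht0, ht1⟩ := ht
  calc (1 - t) ^ k * (1 + k * t) ≤ (1 - t) ^ k * (1 + t) ^ k := by
        have := sub_nonneg.2 ht1
        gcongr
        exact one_add_mul_le_pow (by linarith) k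
    _ = (1 - t ^ 2) ^ k := by rw [← mul_pow]; ring
    _ ≤ 1 := pow_le_one₀ (by nlinarith) (by nlinarith)

lemma mul_le_one_add_mul_mul_subsetProb_not_disjoint (ht : t ∈ Set.Icc 0 1) (hS : S ⊆ Q) {h : ℝ}
    (hhS : h ≤ #S) :
    h * t ≤ (1 + h * t) * subsetProb Q t (fun F => ¬ Disjoint F S) := by
  have hsum := subsetProb_add_subsetProb_not Q t fun F => Disjoint F S
  rw [subsetProb_disjoint hS] at hsum
  have hpow : 0 ≤ (1 - t) ^ #S := pow_nonneg (sub_nonneg.2 ht.2) _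
  have hbern : (1 - t) ^ #S * (1 + h * t) ≤ 1 := by
    refine (mul_le_mul_of_nonneg_left ?_ hpow).trans (one_sub_pow_mul_one_add_le_one ht #S)
    nlinarith [ht.1]
  rw [eq_sub_of_add_eq' hsum]
  linarith

end SubsetProb

section PrefixSum

variable {E : Type*} {Q : Finset E}

open scoped Classical in
/-- For an `r`-element set containing `Q` and an element outside `Q`, the probability that the
elements preceding it in a uniformly random order form a subset of `Q` with the property `p`. -/
noncomputable def prefixSum (r : ℕ) (Q : Finset E) (p : Finset E → Prop) : ℝ :=
  ∑ F ∈ Q.powerset with p F, prefixProb r #F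

lemma prefixSum_eq_integral_subsetProb {r : ℕ} (hr : #Q < r) (p : Finset E → Prop) :
    prefixSum r Q p = ∫ t in (0 : ℝ)..1, (1 - t) ^ (r - #Q - 1) * subsetProb Q t p := by
  classical
  simp_rw [prefixSum, subsetProb, mul_sum]
  rw [intervalIntegral.integral_finsetSum fun F _ => by
    apply Continuous.intervalIntegrable; fun_prop]
  refine sum_congr rfl fun F hF => ?_
  have hcard : #F ≤ #Q := card_le_card (mem_powerset.1 (mem_filter.1 hF).1)
  rw [prefixProb_eq_integral (hcard.trans_lt hr)]
  refine intervalIntegral.integral_congr fun t _ => ?_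
  simp only [show r - 1 - #F = r - #Q - 1 + (#Q - #F) by omega, pow_add]
  ring

end PrefixSum

/-! ### Covering vertices by random edges -/

section Covers

variable {V : Type*}

/-- Unordered pairs of distinct elements of `V`, the edges of the complete graph on `V`. -/
abbrev Edge (V : Type*) := {e : Sym2 V // ¬ e.IsDiag}

/-- `F` covers `A` if no vertex of `A` is isolated in the graph with edge set `F`. -/
def Covers (F : Finset (Edge V)) (A : Finset V) : Prop := ∀ a ∈ A, ∃ e ∈ F, a ∈ e.1

lemma monotone_covers (A : Finset V) : Monotone fun F => Covers F A := fun _ _ hFG hF a ha =>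
  (hF a ha).imp fun _ he => ⟨hFG he.1, he.2⟩

variable [DecidableEq V]

/-- The edges of `Q` at the vertex `v`. -/
def edgesAt (Q : Finset (Edge V)) (v : V) : Finset (Edge V) := {e ∈ Q | v ∈ e.1}

lemma mem_edgesAt {Q : Finset (Edge V)} {v : V} {e : Edge V} :
    e ∈ edgesAt Q v ↔ e ∈ Q ∧ v ∈ e.1 := mem_filter

lemma edgesAt_subset (Q : Finset (Edge V)) (v : V) : edgesAt Q v ⊆ Q := filter_subset _ _

variable {Q D : Finset (Edge V)} {A : Finset V} {f : Edge V} {t h : ℝ}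

lemma subsetProb_mem_and_covers_le (ht : t ∈ Set.Icc 0 1) (hf : f ∈ Q) :
    subsetProb Q t (fun F => f ∈ F ∧ Covers F A) ≤
      t * subsetProb Q t (fun F => Covers F {a ∈ A | a ∉ f.1}) := by
  calc subsetProb Q t (fun F => f ∈ F ∧ Covers F A)
      ≤ subsetProb Q t (fun F => f ∈ F ∧ Covers (F.erase f) {a ∈ A | a ∉ f.1}) := by
        refine subsetProb_mono ht fun F _ ⟨hfF, hF⟩ => ⟨hfF, fun a ha => ?_⟩
        obtain ⟨haA, haf⟩ := mem_filter.1 ha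
        obtain ⟨e, he, hae⟩ := hF a haA
        exact ⟨e, mem_erase.2 ⟨fun hef => haf (hef ▸ hae), he⟩, hae⟩
    _ = t * subsetProb Q t (fun F => Covers (F.erase f) {a ∈ A | a ∉ f.1}) :=
        subsetProb_mem_and_erase hf (Covers · {a ∈ A | a ∉ f.1})
    _ ≤ t * subsetProb Q t (fun F => Covers F {a ∈ A | a ∉ f.1}) :=
        mul_le_mul_of_nonneg_left
          (subsetProb_mono ht fun F _ => monotone_covers _ (erase_subset f F)) ht.1

lemma subsetProb_covers_mul_mul_le (ht : t ∈ Set.Icc 0 1) {z w : V} (hf : f.1 = s(z, w)) :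
    subsetProb Q t (fun F => Covers F {a ∈ A | a ∉ f.1}) *
      (subsetProb Q t (fun F => ¬ Disjoint F (edgesAt Q z)) *
        subsetProb Q t (fun F => ¬ Disjoint F (edgesAt Q w))) ≤
      subsetProb Q t (fun F => Covers F A) := by
  have hz := monotone_not_disjoint (edgesAt Q z)
  have hw := monotone_not_disjoint (edgesAt Q w)
  refine (mul_le_mul_of_nonneg_left (subsetProb_mul_le_and ht hz hw)
    (subsetProb_nonneg ht)).trans ?_
  refine (subsetProb_mul_le_and ht (monotone_covers _)
    fun F G hFG => And.imp (hz hFG) (hw hFG)).trans (subsetProb_mono ht ?_)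
  rintro F - ⟨hcov, hFz, hFw⟩ a ha
  have hmeets {v : V} (hv : ¬ Disjoint F (edgesAt Q v)) : ∃ e ∈ F, v ∈ e.1 := by
    obtain ⟨e, heF, he⟩ := not_disjoint_iff.1 hv
    exact ⟨e, heF, (mem_edgesAt.1 he).2⟩
  by_cases haf : a ∈ f.1
  · rw [hf, Sym2.mem_iff] at haf
    obtain rfl | rfl := haf
    exacts [hmeets hFz, hmeets hFw]
  · exact hcov a (mem_filter.2 ⟨ha, haf⟩)

lemma subsetProb_mem_and_covers_mul_le (ht : t ∈ Set.Icc 0 1) (hh : 0 ≤ h) (hf : f ∈ Q)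
    (hdeg : ∀ v ∈ f.1, h ≤ #(edgesAt Q v)) :
    subsetProb Q t (fun F => f ∈ F ∧ Covers F A) * (h ^ 2 * t) ≤
      (1 + h * t) ^ 2 * subsetProb Q t (fun F => Covers F A) := by
  obtain ⟨z, w, hzw⟩ : ∃ z w, f.1 = s(z, w) := Sym2.exists.1 ⟨f.1, rfl⟩
  have hz := mul_le_one_add_mul_mul_subsetProb_not_disjoint ht (edgesAt_subset Q z)
    (hdeg z (hzw ▸ Sym2.mem_mk_left z w))
  have hw := mul_le_one_add_mul_mul_subsetProb_not_disjoint ht (edgesAt_subset Q w)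
    (hdeg w (hzw ▸ Sym2.mem_mk_right z w))
  have hharris := subsetProb_covers_mul_mul_le (Q := Q) (A := A) ht hzw
  set pz := subsetProb Q t fun F => ¬ Disjoint F (edgesAt Q z)
  set pw := subsetProb Q t fun F => ¬ Disjoint F (edgesAt Q w)
  set p := subsetProb Q t fun F => Covers F {a ∈ A | a ∉ f.1}
  have ht0 : 0 ≤ t := ht.1
  have hp : 0 ≤ p := subsetProb_nonneg ht
  have hht : 0 ≤ h * t := mul_nonneg hh ht0
  calc subsetProb Q t (fun F => f ∈ F ∧ Covers F A) * (h ^ 2 * t)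
      ≤ t * p * (h ^ 2 * t) :=
        mul_le_mul_of_nonneg_right (subsetProb_mem_and_covers_le ht hf) (by positivity)
    _ = p * ((h * t) * (h * t)) := by ring
    _ ≤ p * (((1 + h * t) * pz) * ((1 + h * t) * pw)) :=
        mul_le_mul_of_nonneg_left (mul_le_mul hz hw hht (hht.trans hz)) hp
    _ = (1 + h * t) ^ 2 * (p * (pz * pw)) := by ring
    _ ≤ (1 + h * t) ^ 2 * subsetProb Q t (fun F => Covers F A) := by gcongr

lemma subsetProb_covers_and_not_disjoint_mul_le (ht : t ∈ Set.Icc 0 1) (hh : 0 ≤ h) (hD : D ⊆ Q)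
    (hdeg : ∀ f ∈ D, ∀ v ∈ f.1, h ≤ #(edgesAt Q v)) :
    subsetProb Q t (fun F => Covers F A ∧ ¬ Disjoint F D) * (h ^ 2 * t) ≤
      #D * (1 + h * t) ^ 2 * subsetProb Q t (fun F => Covers F A) := by
  have ht0 : 0 ≤ t := ht.1
  have hunion : subsetProb Q t (fun F => Covers F A ∧ ¬ Disjoint F D) ≤
      ∑ f ∈ D, subsetProb Q t (fun F => f ∈ F ∧ Covers F A) := by
    refine (subsetProb_mono ht fun F _ ⟨hF, hFD⟩ => ?_).trans
      (subsetProb_exists_le ht D fun f F => f ∈ F ∧ Covers F A)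
    obtain ⟨f, hfF, hfD⟩ := not_disjoint_iff.1 hFD
    exact ⟨f, hfD, hfF, hF⟩
  calc subsetProb Q t (fun F => Covers F A ∧ ¬ Disjoint F D) * (h ^ 2 * t)
      ≤ ∑ f ∈ D, subsetProb Q t (fun F => f ∈ F ∧ Covers F A) * (h ^ 2 * t) := by
        rw [← sum_mul]
        gcongr
    _ ≤ ∑ f ∈ D, (1 + h * t) ^ 2 * subsetProb Q t (fun F => Covers F A) :=
        sum_le_sum fun f hf => subsetProb_mem_and_covers_mul_le ht hh (hD hf) (hdeg f hf)
    _ = #D * (1 + h * t) ^ 2 * subsetProb Q t (fun F => Covers F A) := by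
        rw [sum_const, nsmul_eq_mul, mul_assoc]

lemma subsetProb_covers_and_not_disjoint_le (ht : t ∈ Set.Icc 0 1) {ε l : ℝ} (hε : 0 < ε)
    (hh : 0 < h) (hDl : #D ≤ l) (hlh : 4 * l ≤ ε * h) (hD : D ⊆ Q)
    (hdeg : ∀ f ∈ D, ∀ v ∈ f.1, h ≤ #(edgesAt Q v)) :
    subsetProb Q t (fun F => Covers F A ∧ ¬ Disjoint F D) ≤
      ε * subsetProb Q t (fun F => Covers F A) + 2 * l ^ 2 / ε * (1 / h ^ 2 + t ^ 2) := by
  have ht0 : 0 ≤ t := ht.1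
  have hl : 0 ≤ l := (Nat.cast_nonneg _).trans hDl
  have hp : 0 ≤ subsetProb Q t (fun F => Covers F A) := subsetProb_nonneg ht
  -- Harris' inequality suffices unless `t` is very small or very large; then the union bound does.
  by_cases hlarge : 0 < t ∧ l * (1 + h * t) ^ 2 ≤ ε * (h ^ 2 * t)
  · obtain ⟨htpos, hlarge⟩ := hlarge
    have hscaled : subsetProb Q t (fun F => Covers F A ∧ ¬ Disjoint F D) * (h ^ 2 * t) ≤
        ε * subsetProb Q t (fun F => Covers F A) * (h ^ 2 * t) :=
      calc _ ≤ #D * (1 + h * t) ^ 2 * subsetProb Q t (fun F => Covers F A) :=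
            subsetProb_covers_and_not_disjoint_mul_le ht hh.le hD hdeg
        _ ≤ ε * (h ^ 2 * t) * subsetProb Q t (fun F => Covers F A) := by
            exact mul_le_mul_of_nonneg_right
              ((mul_le_mul_of_nonneg_right hDl (sq_nonneg _)).trans hlarge) hp
        _ = ε * subsetProb Q t (fun F => Covers F A) * (h ^ 2 * t) := by ring
    have herror : 0 ≤ 2 * l ^ 2 / ε * (1 / h ^ 2 + t ^ 2) := by positivity
    linarith [le_of_mul_le_mul_right hscaled (by positivity)]
  · have hunion : l * t ≤ 2 * l ^ 2 / ε * (1 / h ^ 2 + t ^ 2) := by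
      obtain rfl | htpos := ht0.eq_or_lt
      · rw [mul_zero]
        positivity
      have hsmall : ε * (h ^ 2 * t) < l * (1 + h * t) ^ 2 := by
        by_contra! hle
        exact hlarge ⟨htpos, hle⟩
      have hcross : 4 * l * (h * t) ≤ ε * h * (h * t) := by gcongr
      have hbound : ε * h ^ 2 * t ≤ 2 * l * (1 + h ^ 2 * t ^ 2) := by linarith
      calc l * t = l * (ε * h ^ 2 * t) / (ε * h ^ 2) := by field_simp
        _ ≤ l * (2 * l * (1 + h ^ 2 * t ^ 2)) / (ε * h ^ 2) := by gcongr
        _ = 2 * l ^ 2 / ε * (1 / h ^ 2 + t ^ 2) := by field_simp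
    have hbad := subsetProb_and_not_disjoint_le ht hD fun F => Covers F A
    have hDt : #D * t ≤ l * t := mul_le_mul_of_nonneg_right hDl ht0
    linarith [mul_nonneg hε.le hp]

lemma prefixSum_covers_and_not_disjoint_le {r : ℕ} {ε l : ℝ} (hε : 0 < ε) (hh : 0 < h)
    (hDl : #D ≤ l) (hlh : 4 * l ≤ ε * h) (hD : D ⊆ Q)
    (hdeg : ∀ f ∈ D, ∀ v ∈ f.1, h ≤ #(edgesAt Q v)) (hr : #Q + h ≤ r) :
    prefixSum r Q (fun F => Covers F A ∧ ¬ Disjoint F D) ≤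
      ε * prefixSum r Q (fun F => Covers F A) + 6 * l ^ 2 / (ε * h ^ 2 * (r - #Q)) := by
  have hQr : #Q < r := by
    rw [← Nat.cast_lt (α := ℝ)]
    linarith
  rw [prefixSum_eq_integral_subsetProb hQr, prefixSum_eq_integral_subsetProb hQr]
  set b := r - #Q - 1
  have hb : (b + 1 : ℝ) = r - #Q := by
    rw [← Nat.cast_sub hQr.le, ← Nat.cast_add_one]
    congr 1
    omega
  have hcontBad := continuous_subsetProb Q fun F => Covers F A ∧ ¬ Disjoint F D
  have hcont := continuous_subsetProb Q fun F => Covers F A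
  rw [← hb]
  calc _ ≤ ∫ t in (0 : ℝ)..1, (ε * ((1 - t) ^ b * subsetProb Q t fun F => Covers F A) +
        2 * l ^ 2 / ε * ((1 - t) ^ b * (1 / h ^ 2 + t ^ 2))) := by
        refine intervalIntegral.integral_mono_on zero_le_one
          (Continuous.intervalIntegrable (by fun_prop) _ _)
          (Continuous.intervalIntegrable (by fun_prop) _ _) fun t ht => ?_
        refine (mul_le_mul_of_nonneg_left
          (subsetProb_covers_and_not_disjoint_le ht hε hh hDl hlh hD hdeg)
          (pow_nonneg (sub_nonneg.2 ht.2) b)).trans_eq ?_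
        ring
    _ = ε * (∫ t in (0 : ℝ)..1, (1 - t) ^ b * subsetProb Q t fun F => Covers F A) +
        2 * l ^ 2 / ε * ∫ t in (0 : ℝ)..1, (1 - t) ^ b * (1 / h ^ 2 + t ^ 2) := by
        rw [intervalIntegral.integral_add (Continuous.intervalIntegrable (by fun_prop) _ _)
          (Continuous.intervalIntegrable (by fun_prop) _ _), intervalIntegral.integral_const_mul,
          intervalIntegral.integral_const_mul]
    _ ≤ ε * (∫ t in (0 : ℝ)..1, (1 - t) ^ b * subsetProb Q t fun F => Covers F A) +
        2 * l ^ 2 / ε * (3 / (h ^ 2 * (b + 1))) := by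
        gcongr
        exact integral_one_sub_pow_mul_add_sq_le hh (by linarith)
    _ = _ := by
        field_simp
        ring

end Covers

/-! ### Critical edges and vertex shares -/

section Critical

variable {V : Type*} [DecidableEq V]

/-- The vertices of `U` that are isolated in the graph with edge set `F`. -/
def uncovered (U : Finset V) (F : Finset (Edge V)) : Finset V := {v ∈ U | ∀ e ∈ F, v ∉ e.1}

/-- Adding `e` to `F` removes the last isolated vertices in `U`. -/
def IsCritical (U : Finset V) (F : Finset (Edge V)) (e : Edge V) : Prop :=
  (uncovered U F).Nonempty ∧ ∀ v ∈ uncovered U F, v ∈ e.1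

variable {R F : Finset (Edge V)} {U : Finset V} {e : Edge V} {v y : V}

lemma mem_uncovered : v ∈ uncovered U F ↔ v ∈ U ∧ ∀ e ∈ F, v ∉ e.1 := mem_filter

lemma uncovered_subset (U : Finset V) (F : Finset (Edge V)) : uncovered U F ⊆ U := filter_subset _ _

lemma covers_iff_uncovered_subset (A : Finset V) (hA : A ⊆ U) :
    Covers F A ↔ uncovered U F ⊆ U \ A := by
  refine ⟨fun hF v hv => ?_, fun hF a ha => ?_⟩
  · obtain ⟨hvU, hvF⟩ := mem_uncovered.1 hv
    refine mem_sdiff.2 ⟨hvU, fun hvA => ?_⟩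
    obtain ⟨e, he, hve⟩ := hF v hvA
    exact hvF e he hve
  · by_contra! haF
    exact (mem_sdiff.1 (hF (mem_uncovered.2 ⟨hA ha, haF⟩))).2 ha

lemma covers_filter_notMem_iff (hy : y ∈ uncovered U F) :
    Covers F {a ∈ U | a ∉ e.1} ↔ IsCritical U F e := by
  rw [covers_iff_uncovered_subset _ (filter_subset _ _), IsCritical, and_iff_right ⟨y, hy⟩]
  refine forall₂_congr fun v hv => ?_
  simp [(mem_uncovered.1 hv).1]

lemma covers_erase_iff (hy : y ∈ uncovered U F) :
    Covers F (U.erase y) ↔ uncovered U F = {y} := by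
  rw [covers_iff_uncovered_subset _ (erase_subset _ _), sdiff_erase_self (mem_uncovered.1 hy).1,
    subset_singleton_iff, or_iff_right (ne_empty_of_mem hy)]

lemma IsCritical.card_uncovered_le_two (he : IsCritical U F e) : #(uncovered U F) ≤ 2 := by
  rw [← Sym2.card_toFinset_of_not_isDiag e.1 e.2]
  exact card_le_card fun v hv => Sym2.mem_toFinset.2 (he.2 v hv)

open scoped Classical in
lemma ite_isCritical_div_card_eq (hy : y ∈ uncovered U F) (hye : y ∈ e.1) (w : ℝ) :
    (if IsCritical U F e then w / #(uncovered U F) else 0) =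
      ((if Covers F {a ∈ U | a ∉ e.1} then w else 0) +
        (if Covers F (U.erase y) then w else 0)) / 2 := by
  rw [covers_filter_notMem_iff hy, covers_erase_iff hy]
  by_cases hone : uncovered U F = {y}
  · have hcrit : IsCritical U F e := ⟨⟨y, hy⟩, by simpa [hone] using hye⟩
    simp [hcrit, hone]
  · by_cases hcrit : IsCritical U F e
    · have hcard : #(uncovered U F) = 2 := by
        refine hcrit.card_uncovered_le_two.antisymm (Nat.lt_of_le_of_ne (card_pos.2 ⟨y, hy⟩) ?_)
        rintro h
        obtain ⟨x, hx⟩ := card_eq_one.1 h.symm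
        obtain rfl : y = x := mem_singleton.1 (hx ▸ hy)
        exact hone hx
      simp [hcrit, hone, hcard]
    · simp [hcrit, hone]

open scoped Classical in
/-- The pairs of a set `F ⊆ R` and an edge of `R` that is critical for `F`. -/
noncomputable def criticalPairs (R : Finset (Edge V)) (U : Finset V) :
    Finset (Finset (Edge V) × Edge V) :=
  {p ∈ R.powerset ×ˢ R | IsCritical U p.1 p.2}

lemma mem_criticalPairs {p : Finset (Edge V) × Edge V} :
    p ∈ criticalPairs R U ↔ (p.1 ⊆ R ∧ p.2 ∈ R) ∧ IsCritical U p.1 p.2 := by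
  simp [criticalPairs]

open scoped Classical in
/-- The expected share of `v` when, in a uniformly random order of `R`, one unit is divided equally
among the vertices of `U` that are covered last, counting only the orders for which the set of
edges preceding the critical edge has the property `p`. -/
noncomputable def share (R : Finset (Edge V)) (U : Finset V) (p : Finset (Edge V) → Prop)
    (v : V) : ℝ :=
  ∑ x ∈ criticalPairs R U with v ∈ uncovered U x.1 ∧ p x.1,
    prefixProb #R #x.1 / #(uncovered U x.1)

lemma prefixProb_div_nonneg (r k j : ℕ) : 0 ≤ prefixProb r k / j :=
  div_nonneg (prefixProb_nonneg r k) (Nat.cast_nonneg j)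

lemma sum_share (R : Finset (Edge V)) (U : Finset V) :
    ∑ v ∈ U, share R U (fun _ => True) v = ∑ x ∈ criticalPairs R U, prefixProb #R #x.1 := by
  classical
  simp only [share, sum_filter, and_true]
  rw [sum_comm]
  refine sum_congr rfl fun x hx => ?_
  have hne : (#(uncovered U x.1) : ℝ) ≠ 0 :=
    Nat.cast_ne_zero.2 (card_ne_zero.2 (mem_criticalPairs.1 hx).2.1)
  rw [← sum_filter, filter_mem_eq_inter,
    inter_eq_right.2 (uncovered_subset U x.1), sum_const, nsmul_eq_mul, mul_div_cancel₀ _ hne]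

open scoped Classical in
lemma sum_share_le (R : Finset (Edge V)) (U Z : Finset V) :
    ∑ v ∈ Z, share R U (fun _ => True) v ≤
      ∑ x ∈ criticalPairs R U with ¬ Disjoint Z (uncovered U x.1), prefixProb #R #x.1 := by
  simp only [share, sum_filter, and_true]
  rw [sum_comm]
  refine sum_le_sum fun x hx => ?_
  rw [← sum_filter, filter_mem_eq_inter, sum_const, nsmul_eq_mul]
  have hpos : (0 : ℝ) < #(uncovered U x.1) :=
    Nat.cast_pos.2 (card_pos.2 (mem_criticalPairs.1 hx).2.1)
  split_ifs with hdisj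
  · simp [disjoint_iff_inter_eq_empty.1 hdisj]
  · rw [mul_div_left_comm]
    refine mul_le_of_le_one_right (prefixProb_nonneg _ _) ((div_le_one hpos).2 ?_)
    exact_mod_cast card_le_card inter_subset_right

lemma share_add_share_not (p : Finset (Edge V) → Prop) (v : V) :
    share R U p v + share R U (fun F => ¬ p F) v = share R U (fun _ => True) v := by
  classical
  simp only [share, ← filter_filter, filter_true]
  exact sum_filter_add_sum_filter_not _ _ _

lemma share_eq_sum_prefixSum (hy : y ∈ U) (p : Finset (Edge V) → Prop) :
    share R U p y = ∑ e ∈ edgesAt R y,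
      (prefixSum #R (R \ edgesAt R y) (fun F => Covers F {a ∈ U | a ∉ e.1} ∧ p F) +
        prefixSum #R (R \ edgesAt R y) (fun F => Covers F (U.erase y) ∧ p F)) / 2 := by
  classical
  have hmem_uncovered {F : Finset (Edge V)} :
      F ⊆ R \ edgesAt R y ↔ F ⊆ R ∧ y ∈ uncovered U F := by
    rw [subset_sdiff, mem_uncovered, and_iff_right hy, disjoint_left]
    refine and_congr_right fun hFR => forall₂_congr fun e he => ?_
    rw [mem_edgesAt, and_iff_right (hFR he)]
  have hpairs : {x ∈ criticalPairs R U | y ∈ uncovered U x.1 ∧ p x.1} =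
      {x ∈ (R \ edgesAt R y).powerset ×ˢ edgesAt R y | IsCritical U x.1 x.2 ∧ p x.1} := by
    ext ⟨F, e⟩
    simp only [mem_filter, mem_criticalPairs, mem_product, mem_powerset, mem_edgesAt,
      hmem_uncovered]
    refine ⟨?_, by tauto⟩
    rintro ⟨⟨⟨hFR, heR⟩, hcrit⟩, hyF, hp⟩
    exact ⟨⟨⟨hFR, hyF⟩, heR, hcrit.2 y hyF⟩, hcrit, hp⟩
  rw [share, hpairs, sum_filter, sum_product_right]
  refine sum_congr rfl fun e he => ?_
  simp only [prefixSum, sum_filter]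
  rw [← sum_add_distrib, sum_div]
  refine sum_congr rfl fun F hF => ?_
  have hyF := (hmem_uncovered.1 (mem_powerset.1 hF)).2
  have hhalf := ite_isCritical_div_card_eq hyF (mem_edgesAt.1 he).2 (prefixProb #R #F)
  by_cases hp : p F
  · simpa only [hp, and_true] using hhalf
  · simp [hp]

end Critical

section Swap

variable {V W : Type*}

/-- The map on edges induced by an injection of vertices. -/
def mapEdge (φ : V ↪ W) : Edge V ↪ Edge W where
  toFun e := ⟨e.1.map φ, mt (Sym2.isDiag_map φ.injective).1 e.2⟩
  inj' _ _ h := Subtype.ext (Sym2.map.injective φ.injective (congrArg Subtype.val h))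

lemma apply_mem_mapEdge {φ : V ↪ W} {v : V} {e : Edge V} :
    φ v ∈ (mapEdge φ e).1 ↔ v ∈ e.1 :=
  Sym2.mem_map.trans (by simp)

variable [DecidableEq V] [DecidableEq W]

lemma uncovered_map (φ : V ↪ W) (U : Finset V) (F : Finset (Edge V)) :
    uncovered (U.map φ) (F.map (mapEdge φ)) = (uncovered U F).map φ := by
  simp only [uncovered, filter_map]
  refine congrArg _ (filter_congr fun v _ => ?_)
  simp only [forall_mem_map, Function.comp_apply, apply_mem_mapEdge]

lemma IsCritical.map {U : Finset V} {F : Finset (Edge V)} {e : Edge V} (he : IsCritical U F e)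
    (φ : V ↪ W) : IsCritical (U.map φ) (F.map (mapEdge φ)) (mapEdge φ e) := by
  rw [IsCritical, uncovered_map]
  refine ⟨he.1.map, fun w hw => ?_⟩
  obtain ⟨v, hv, rfl⟩ := Finset.mem_map.1 hw
  exact apply_mem_mapEdge.2 (he.2 v hv)

variable {R : Finset (Edge V)} {U : Finset V} {y z : V}

/-- The involution of the edges induced by the transposition of the vertices `y` and `z`. -/
abbrev swapEdge (y z : V) : Edge V ↪ Edge V := mapEdge (Equiv.swap y z).toEmbedding

lemma swapEdge_eq_self {e : Edge V} (hy : y ∉ e.1) (hz : z ∉ e.1) : swapEdge y z e = e := by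
  refine Subtype.ext ((Sym2.map_congr fun v hv => ?_).trans (congrFun Sym2.map_id e.1))
  exact Equiv.swap_apply_of_ne_of_ne (ne_of_mem_of_not_mem hv hy) (ne_of_mem_of_not_mem hv hz)

lemma share_swap_le {p : Finset (Edge V) → Prop} (hy : y ∈ U) (hz : z ∈ U)
    (hzR : ∀ e : Edge V, z ∈ e.1 → e ∈ R)
    (hp : ∀ F ⊆ R, y ∈ uncovered U F → p F → F.map (swapEdge y z) ⊆ R) :
    share R U p y ≤ share R U (fun _ => True) z := by
  classical
  have hU : U.map (Equiv.swap y z).toEmbedding = U := by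
    refine map_perm fun v hv => ?_
    obtain rfl | rfl := (Equiv.swap_apply_ne_self_iff.1 hv).2 <;> assumption
  let Φ := (mapEmbedding (swapEdge y z)).toEmbedding.prodMap (swapEdge y z)
  have huncovered (x : Finset (Edge V) × Edge V) :
      uncovered U (Φ x).1 = (uncovered U x.1).map (Equiv.swap y z).toEmbedding := by
    conv_lhs => rw [← hU]
    exact uncovered_map _ _ _
  calc share R U p y
      = ∑ x ∈ {x ∈ criticalPairs R U | y ∈ uncovered U x.1 ∧ p x.1}.map Φ,
          prefixProb #R #x.1 / #(uncovered U x.1) := by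
        rw [share, sum_map]
        refine sum_congr rfl fun x _ => ?_
        rw [huncovered, card_map]
        simp [Φ]
    _ ≤ share R U (fun _ => True) z := by
        refine sum_le_sum_of_subset_of_nonneg (fun x hx => ?_)
          fun x _ _ => prefixProb_div_nonneg _ _ _
        obtain ⟨⟨F, e⟩, hFe, rfl⟩ := Finset.mem_map.1 hx
        obtain ⟨hFe, hyF, hpF⟩ := mem_filter.1 hFe
        obtain ⟨⟨hFR, -⟩, hcrit⟩ := mem_criticalPairs.1 hFe
        have hzmem {e' : Edge V} (h : y ∈ e'.1) : z ∈ (swapEdge y z e').1 := by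
          simpa using (apply_mem_mapEdge (φ := (Equiv.swap y z).toEmbedding)).2 h
        simp only [mem_filter, mem_criticalPairs, huncovered, Finset.mem_map]
        refine ⟨⟨⟨hp F hFR hyF hpF, hzR _ (hzmem (hcrit.2 y hyF))⟩, ?_⟩, ⟨y, hyF, by simp⟩,
          trivial⟩
        have hmap := hcrit.map (Equiv.swap y z).toEmbedding
        rwa [hU] at hmap

end Swap

section Compare

variable {V : Type*} [DecidableEq V] {R D : Finset (Edge V)} {U : Finset V} {y z : V} {ε l h : ℝ}

lemma share_not_disjoint_le (hy : y ∈ U) (hε : 0 < ε) (hh : 0 < h) (hDl : #D ≤ l)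
    (hlh : 4 * l ≤ ε * h) (hD : D ⊆ R \ edgesAt R y)
    (hdeg : ∀ v ≠ y, h ≤ #(edgesAt (R \ edgesAt R y) v)) (hRy : h ≤ #(edgesAt R y)) :
    share R U (fun F => ¬ Disjoint F D) y ≤
      ε * share R U (fun _ => True) y + 6 * l ^ 2 / (ε * h ^ 2) := by
  have hcard : (#(R \ edgesAt R y) : ℝ) = #R - #(edgesAt R y) := by
    rw [card_sdiff_of_subset (edgesAt_subset R y), Nat.cast_sub (card_le_card (edgesAt_subset R y))]
  have hdegD (f : Edge V) (hf : f ∈ D) (v : V) (hv : v ∈ f.1) :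
      h ≤ #(edgesAt (R \ edgesAt R y) v) := by
    refine hdeg v ?_
    rintro rfl
    obtain ⟨hfR, hfy⟩ := mem_sdiff.1 (hD hf)
    exact hfy (mem_edgesAt.2 ⟨hfR, hv⟩)
  have hterm (A : Finset V) := prefixSum_covers_and_not_disjoint_le (A := A) hε hh hDl hlh hD hdegD
    (r := #R) (by linarith)
  have hd : (#(edgesAt R y) : ℝ) ≠ 0 := (hh.trans_le hRy).ne'
  rw [hcard, sub_sub_cancel] at hterm
  simp only [share_eq_sum_prefixSum hy, and_true]
  calc _ ≤ ∑ e ∈ edgesAt R y,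
        (ε * ((prefixSum #R (R \ edgesAt R y) (fun F => Covers F {a ∈ U | a ∉ e.1}) +
          prefixSum #R (R \ edgesAt R y) (fun F => Covers F (U.erase y))) / 2) +
          6 * l ^ 2 / (ε * h ^ 2 * #(edgesAt R y))) :=
        sum_le_sum fun e _ => by linarith [hterm {a ∈ U | a ∉ e.1}, hterm (U.erase y)]
    _ = _ := by
        rw [sum_add_distrib, ← mul_sum, sum_const, nsmul_eq_mul]
        field_simp

lemma card_swapEdge_notMem_le [Fintype V] (R : Finset (Edge V)) (y z : V) :
    #{e ∈ R \ edgesAt R y | swapEdge y z e ∉ R} ≤ #(edgesAt Rᶜ y) := by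
  refine card_le_card_of_injOn (swapEdge y z) (fun e he => ?_) (swapEdge y z).injective.injOn
  obtain ⟨heQ, heR⟩ := mem_filter.1 he
  obtain ⟨heQ, hye⟩ := mem_sdiff.1 heQ
  have hye : y ∉ e.1 := fun hy => hye (mem_edgesAt.2 ⟨heQ, hy⟩)
  refine mem_edgesAt.2 ⟨mem_compl.2 heR, ?_⟩
  by_cases hze : z ∈ e.1
  · simpa using (apply_mem_mapEdge (φ := (Equiv.swap y z).toEmbedding)).2 hze
  · rw [swapEdge_eq_self hye hze] at heR
    exact absurd heQ heR

-- Exchanging `y` and `z` turns critical pairs with `y` uncovered into critical pairs with `z`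
-- uncovered, unless `F` contains one of the few edges that leave `R` under the exchange.
lemma one_sub_mul_share_sub_le_share [Fintype V] (hy : y ∈ U) (hz : z ∈ U)
    (hzR : ∀ e : Edge V, z ∈ e.1 → e ∈ R) (hε : 0 < ε) (hh : 0 < h) (hlh : 4 * l ≤ ε * h)
    (hl : #(edgesAt Rᶜ y) ≤ l) (hdeg : ∀ v ≠ y, h ≤ #(edgesAt (R \ edgesAt R y) v))
    (hRy : h ≤ #(edgesAt R y)) :
    (1 - ε) * share R U (fun _ => True) y - 6 * l ^ 2 / (ε * h ^ 2) ≤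
      share R U (fun _ => True) z := by
  set D := {e ∈ R \ edgesAt R y | swapEdge y z e ∉ R}
  have hDl : #D ≤ l := (Nat.cast_le.2 (card_swapEdge_notMem_le R y z)).trans hl
  have hgood : share R U (fun F => Disjoint F D) y ≤ share R U (fun _ => True) z := by
    refine share_swap_le hy hz hzR fun F hFR hyF hFD f hf => ?_
    obtain ⟨e, heF, rfl⟩ := Finset.mem_map.1 hf
    by_contra heR
    refine disjoint_left.1 hFD heF (mem_filter.2 ⟨mem_sdiff.2 ⟨hFR heF, fun hey => ?_⟩, heR⟩)
    exact (mem_uncovered.1 hyF).2 e heF (mem_edgesAt.1 hey).2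
  linarith [share_add_share_not (R := R) (U := U) (fun F => Disjoint F D) y,
    share_not_disjoint_le (U := U) hy hε hh hDl hlh (filter_subset _ _) hdeg hRy]

end Compare

/-! ### Random orders with a prescribed beginning -/

lemma exists_perm_map_eq_of_nodup {α : Type*} {l l' : List α} (hl : l.Nodup) (hl' : l'.Nodup)
    (hlen : l.length = l'.length) : ∃ π : Equiv.Perm α, l.map π = l' := by
  obtain ⟨π, hπ⟩ := (Equiv.Perm.isMultiplyPretransitive α l.length).exists_smul_eq
    ⟨l.get, List.nodup_iff_injective_get.1 hl⟩
    ⟨fun i => l'.get (i.cast hlen),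
      (List.nodup_iff_injective_get.1 hl').comp (Fin.cast_injective hlen)⟩
  refine ⟨π, List.ext_getElem (by simpa using hlen) fun i hi _ => ?_⟩
  rw [List.getElem_map]
  exact congrArg (fun φ : Fin l.length ↪ α => φ ⟨i, by simpa using hi⟩) hπ

lemma exists_perm_map_eq {α : Type*} [DecidableEq α] {A F F' : Finset α} {e e' : α}
    (hF : Disjoint A F) (hF' : Disjoint A F') (he : e ∉ A ∪ F) (he' : e' ∉ A ∪ F')
    (hcard : #F = #F') :
    ∃ π : Equiv.Perm α, (∀ x ∈ A, π x = x) ∧ F.map π.toEmbedding = F' ∧ π e = e' := by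
  have hnodup {F : Finset α} {e : α} (hF : Disjoint A F) (he : e ∉ A ∪ F) :
      (A.toList ++ F.toList ++ [e]).Nodup := by
    refine List.nodup_append.2 ⟨List.nodup_append.2 ⟨nodup_toList A, nodup_toList F, ?_⟩,
      List.nodup_singleton e, ?_⟩
    · rintro a ha b hb rfl
      exact disjoint_left.1 hF (mem_toList.1 ha) (mem_toList.1 hb)
    · rintro a ha b hb rfl
      refine he ?_
      simpa [List.mem_singleton.1 hb] using ha
  obtain ⟨π, hπ⟩ := exists_perm_map_eq_of_nodup (hnodup hF he) (hnodup hF' he') (by simp [hcard])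
  simp only [List.map_append] at hπ
  obtain ⟨hAF, he⟩ := List.append_inj hπ (by simp [hcard])
  obtain ⟨hA, hF⟩ := List.append_inj hAF (by simp)
  refine ⟨π, fun x hx => ?_, ?_, by simpa using he⟩
  · exact List.map_inj_left.1 (hA.trans (List.map_id _).symm) x (mem_toList.2 hx)
  · ext x
    rw [← mem_toList (s := F'), ← hF, Finset.mem_map, List.mem_map]
    simp

section Orders

variable {α : Type*} [Fintype α] [DecidableEq α] {m N : ℕ}

/-- The orders of `α` that begin with the sequence `g`. -/
def extensions (hmN : m ≤ N) (g : Fin m → α) : Finset (Fin N ≃ α) :=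
  {σ | ∀ i, σ (Fin.castLE hmN i) = g i}

/-- The elements that do not occur in the sequence `g`. -/
def unrevealed (g : Fin m → α) : Finset α := (univ.image g)ᶜ

/-- The elements not occurring in `g` that are among the first `k` elements in the order `σ`. -/
def newBefore (g : Fin m → α) (σ : Fin N ≃ α) (k : ℕ) : Finset α :=
  {x ∈ unrevealed g | (σ.symm x : ℕ) < k}

variable {hmN : m ≤ N} {g : Fin m → α} {σ : Fin N ≃ α} {F : Finset α} {e x : α}

lemma mem_extensions : σ ∈ extensions hmN g ↔ ∀ i, σ (Fin.castLE hmN i) = g i :=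
  mem_filter_univ _

lemma mem_unrevealed : x ∈ unrevealed g ↔ ∀ i, g i ≠ x := by simp [unrevealed]

lemma mem_newBefore {k : ℕ} :
    x ∈ newBefore g σ k ↔ x ∈ unrevealed g ∧ (σ.symm x : ℕ) < k := mem_filter

lemma monotone_newBefore (g : Fin m → α) (σ : Fin N ≃ α) : Monotone (newBefore g σ) :=
  fun _ _ hkl => monotone_filter_right _ fun _ _ hx => hx.trans_le hkl

lemma mem_unrevealed_iff_le (hσ : σ ∈ extensions hmN g) : x ∈ unrevealed g ↔ m ≤ σ.symm x := by
  rw [mem_extensions] at hσ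
  rw [mem_unrevealed]
  refine ⟨fun hx => ?_, fun hx i hi => ?_⟩
  · by_contra! hlt
    refine hx ⟨σ.symm x, hlt⟩ ?_
    rw [← hσ, ← Equiv.eq_symm_apply]
    rfl
  · rw [← hσ, ← Equiv.eq_symm_apply] at hi
    exact hx.not_gt (hi ▸ i.2)

lemma card_newBefore_add (hσ : σ ∈ extensions hmN g) {k : ℕ} (hmk : m ≤ k) (hkN : k ≤ N) :
    #(newBefore g σ k) + m = k := by
  have himage : (newBefore g σ k).map (σ.symm.toEmbedding.trans Fin.valEmbedding) = Ico m k := by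
    ext i
    simp only [Finset.mem_map, mem_newBefore, mem_unrevealed_iff_le hσ, mem_Ico]
    refine ⟨?_, fun hi => ⟨σ ⟨i, hi.2.trans_le hkN⟩, by simpa using hi⟩⟩
    rintro ⟨x, hx, rfl⟩
    exact hx
  rw [← card_map, himage, Nat.card_Ico, Nat.sub_add_cancel hmk]

lemma newBefore_eq_unrevealed (g : Fin m → α) (σ : Fin N ≃ α) : newBefore g σ N = unrevealed g :=
  filter_true_of_mem fun x _ => (σ.symm x).2

lemma card_unrevealed_add (hσ : σ ∈ extensions hmN g) : #(unrevealed g) + m = N := by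
  rw [← newBefore_eq_unrevealed g σ, card_newBefore_add hσ hmN le_rfl]

lemma newBefore_trans {π : Equiv.Perm α} (hπ : ∀ i, π (g i) = g i) (k : ℕ) :
    newBefore g (σ.trans π) k = (newBefore g σ k).map π.toEmbedding := by
  ext x
  simp [mem_map_equiv, mem_newBefore, mem_unrevealed, Equiv.eq_symm_apply, hπ]

lemma card_filter_newBefore_eq {F' : Finset α} {e' : α} (hF : F ⊆ unrevealed g)
    (hF' : F' ⊆ unrevealed g) (he : e ∈ unrevealed g \ F) (he' : e' ∈ unrevealed g \ F')
    (hcard : #F = #F') :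
    #{σ ∈ extensions hmN g | newBefore g σ (σ.symm e) = F} =
      #{σ ∈ extensions hmN g | newBefore g σ (σ.symm e') = F'} := by
  have hdisj {F : Finset α} (hF : F ⊆ unrevealed g) : Disjoint (univ.image g) F :=
    disjoint_compl_right.mono_right hF
  have hnotMem {F : Finset α} {e : α} (he : e ∈ unrevealed g \ F) : e ∉ univ.image g ∪ F := by
    simpa [unrevealed] using he
  obtain ⟨π, hπ, rfl, rfl⟩ :=
    exists_perm_map_eq (hdisj hF) (hdisj hF') (hnotMem he) (hnotMem he') hcard
  have hπg (i : Fin m) : π (g i) = g i := hπ _ (mem_image_of_mem g (mem_univ i))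
  refine card_equiv ((Equiv.refl _).equivCongr π) fun σ => ?_
  have hext : (∀ i, π (σ (Fin.castLE hmN i)) = g i) ↔ ∀ i, σ (Fin.castLE hmN i) = g i :=
    forall_congr' fun i => by rw [← π.injective.eq_iff (a := σ _), hπg]
  simp [mem_extensions, hext, newBefore_trans hπg, Equiv.equivCongr]

lemma existsUnique_card_newBefore_eq (hσ : σ ∈ extensions hmN g) {k : ℕ}
    (hk : k < #(unrevealed g)) :
    ∃! e, e ∈ unrevealed g ∧ #(newBefore g σ (σ.symm e)) = k := by
  have hcard := card_unrevealed_add hσ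
  have hiff (e : α) : (e ∈ unrevealed g ∧ #(newBefore g σ (σ.symm e)) = k) ↔
      (σ.symm e : ℕ) = m + k := by
    rw [mem_unrevealed_iff_le hσ]
    constructor
    · rintro ⟨hme, rfl⟩
      rw [add_comm, card_newBefore_add hσ hme (σ.symm e).2.le]
    · intro he
      have hme : m ≤ σ.symm e := by omega
      exact ⟨hme, by linarith [card_newBefore_add hσ hme (σ.symm e).2.le]⟩
  refine ⟨σ ⟨m + k, by omega⟩, (hiff _).2 (by simp), fun e he => ?_⟩
  rw [← σ.symm_apply_eq]
  exact Fin.ext ((hiff e).1 he)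

lemma card_pairs_newBefore_eq_one (hσ : σ ∈ extensions hmN g) {k : ℕ}
    (hk : k < #(unrevealed g)) :
    #{x ∈ (powersetCard k (unrevealed g)).sigma fun F => unrevealed g \ F |
      newBefore g σ (σ.symm x.2) = x.1} = 1 := by
  obtain ⟨e, ⟨heR, he⟩, huniq⟩ := existsUnique_card_newBefore_eq hσ hk
  refine card_eq_one.2 ⟨⟨newBefore g σ (σ.symm e), e⟩, ?_⟩
  ext ⟨F, e'⟩
  simp only [mem_filter, mem_sigma, mem_powersetCard, mem_singleton]
  constructor
  · rintro ⟨⟨⟨-, hF⟩, he'⟩, rfl⟩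
    rw [huniq e' ⟨(mem_sdiff.1 he').1, hF⟩]
  · rintro ⟨⟩
    have hnotMem : e ∉ newBefore g σ (σ.symm e) := by simp [mem_newBefore]
    exact ⟨⟨⟨filter_subset _ _, he⟩, mem_sdiff.2 ⟨heR, hnotMem⟩⟩, rfl⟩

lemma card_extensions_eq_mul (hF : F ⊆ unrevealed g) (he : e ∈ unrevealed g \ F) :
    #(extensions hmN g) = (#(unrevealed g)).choose #F * (#(unrevealed g) - #F) *
      #{σ ∈ extensions hmN g | newBefore g σ (σ.symm e) = F} := by
  set R := unrevealed g
  have hFR : #F < #R :=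
    card_lt_card (hF.ssubset_of_mem_notMem (mem_sdiff.1 he).1 (mem_sdiff.1 he).2)
  let pairs : Finset (Σ _ : Finset α, α) := (powersetCard #F R).sigma fun F' => R \ F'
  have hpairs : #pairs = (#R).choose #F * (#R - #F) := by
    rw [card_sigma, sum_const_nat fun F' hF' => ?_, card_powersetCard]
    obtain ⟨hF'R, hF'⟩ := mem_powersetCard.1 hF'
    rw [card_sdiff_of_subset hF'R, hF']
  have hfibre (x) (hx : x ∈ pairs) :
      #{σ ∈ extensions hmN g | newBefore g σ (σ.symm x.2) = x.1} =
        #{σ ∈ extensions hmN g | newBefore g σ (σ.symm e) = F} := by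
    obtain ⟨hF', he'⟩ := mem_sigma.1 hx
    obtain ⟨hF'R, hF'⟩ := mem_powersetCard.1 hF'
    exact card_filter_newBefore_eq hF'R hF he' he hF'
  have hcount := sum_card_bipartiteAbove_eq_sum_card_bipartiteBelow
    (fun x σ => newBefore g σ (σ.symm x.2) = x.1) (s := pairs) (t := extensions hmN g)
  simp only [bipartiteAbove, bipartiteBelow] at hcount
  rw [sum_const_nat hfibre, sum_const_nat fun σ hσ => card_pairs_newBefore_eq_one hσ hFR, hpairs,
    mul_one] at hcount
  exact hcount.symm

lemma prefixProb_mul_card_extensions (hF : F ⊆ unrevealed g) (he : e ∈ unrevealed g \ F) :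
    prefixProb #(unrevealed g) #F * #(extensions hmN g) =
      #{σ ∈ extensions hmN g | newBefore g σ (σ.symm e) = F} := by
  have hFR : #F < #(unrevealed g) :=
    card_lt_card (hF.ssubset_of_mem_notMem (mem_sdiff.1 he).1 (mem_sdiff.1 he).2)
  rw [card_extensions_eq_mul hF he, prefixProb, Nat.cast_mul (_ * _), inv_mul_cancel_left₀]
  rw [Nat.cast_ne_zero]
  exact mul_ne_zero (Nat.choose_pos hFR.le).ne' (Nat.sub_ne_zero_of_lt hFR)

lemma extensions_nonempty (hN : Fintype.card α = N) (hmN : m ≤ N) (hg : Function.Injective g) :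
    (extensions hmN g).Nonempty := by
  let σ : Fin N ≃ α := (Fintype.equivFinOfCardEq hN).symm
  obtain ⟨π, hπ⟩ := exists_perm_map_eq_of_nodup
    (List.nodup_ofFn.2 (σ.injective.comp (Fin.castLE_injective hmN))) (List.nodup_ofFn.2 hg)
    (by simp)
  rw [List.map_ofFn] at hπ
  exact ⟨σ.trans π, mem_extensions.2 fun i => congrFun (List.ofFn_injective hπ) i⟩

end Orders

section CriticalOrders

variable {V : Type*} [DecidableEq V] {m N : ℕ} {hmN : m ≤ N} {g : Fin m → Edge V}
  {σ : Fin N ≃ Edge V} {F : Finset (Edge V)} {U : Finset V} {e e' : Edge V}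

lemma isCritical_iff : IsCritical U F e ↔ ¬ Covers F U ∧ Covers (insert e F) U := by
  rw [IsCritical, covers_iff_uncovered_subset U subset_rfl, Finset.sdiff_self, subset_empty,
    nonempty_iff_ne_empty]
  refine and_congr_right fun _ => ⟨fun he v hv => ?_, fun he v hv => ?_⟩
  · by_cases hvF : v ∈ uncovered U F
    · exact ⟨e, mem_insert_self e F, he v hvF⟩
    · simp only [mem_uncovered, hv, true_and, not_forall, not_not] at hvF
      obtain ⟨f, hf, hvf⟩ := hvF
      exact ⟨f, mem_insert_of_mem hf, hvf⟩
  · obtain ⟨hvU, hvF⟩ := mem_uncovered.1 hv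
    obtain ⟨f, hf, hvf⟩ := he v hvU
    exact (mem_insert.1 hf).elim (fun h => h ▸ hvf) fun hf => (hvF f hf hvf).elim

lemma IsCritical.notMem (he : IsCritical U F e) : e ∉ F := fun heF => by
  obtain ⟨hF, hF'⟩ := isCritical_iff.1 he
  exact hF (insert_eq_of_mem heF ▸ hF')

variable [Fintype V]

lemma insert_newBefore_subset (he : e ∈ unrevealed g) {k : ℕ} (hk : σ.symm e < k) :
    insert e (newBefore g σ (σ.symm e)) ⊆ newBefore g σ k :=
  insert_subset (mem_newBefore.2 ⟨he, hk⟩) (monotone_newBefore g σ hk.le)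

lemma eq_of_isCritical (he : e ∈ unrevealed g) (he' : e' ∈ unrevealed g)
    (hcrit : IsCritical U (newBefore g σ (σ.symm e)) e)
    (hcrit' : IsCritical U (newBefore g σ (σ.symm e')) e') : e = e' := by
  wlog hle : σ.symm e ≤ σ.symm e' generalizing e e'
  · exact (this he' he hcrit' hcrit (le_of_not_ge hle)).symm
  by_contra hne
  have hlt : σ.symm e < σ.symm e' := lt_of_le_of_ne hle (σ.symm.injective.ne hne)
  exact (isCritical_iff.1 hcrit').1
    (monotone_covers U (insert_newBefore_subset he hlt) (isCritical_iff.1 hcrit).2)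

lemma exists_isCritical (hU : U.Nonempty) (hRU : Covers (unrevealed g) U) (σ : Fin N ≃ Edge V) :
    ∃ e ∈ unrevealed g, IsCritical U (newBefore g σ (σ.symm e)) e := by
  obtain ⟨k, hk, hk'⟩ : ∃ k, ¬ Covers (newBefore g σ k) U ∧ Covers (newBefore g σ (k + 1)) U := by
    by_contra! hstep
    obtain ⟨v, hv⟩ := hU
    have hzero : ¬ Covers (newBefore g σ 0) U := fun h => by simpa [newBefore] using h v hv
    have hnever (k : ℕ) : ¬ Covers (newBefore g σ k) U := k.rec hzero hstep
    exact hnever N (by rwa [newBefore_eq_unrevealed])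
  obtain ⟨e, he, hek⟩ := not_subset.1 fun h => hk (monotone_covers U h hk')
  obtain ⟨heR, hlt⟩ := mem_newBefore.1 he
  obtain rfl : (σ.symm e : ℕ) = k :=
    (Nat.lt_succ_iff.1 hlt).antisymm (not_lt.1 fun h => hek (mem_newBefore.2 ⟨heR, h⟩))
  refine ⟨e, heR, isCritical_iff.2 ⟨hk, monotone_covers U (fun x hx => ?_) hk'⟩⟩
  obtain ⟨hxR, hxe⟩ := mem_newBefore.1 hx
  rcases Nat.lt_succ_iff_lt_or_eq.1 hxe with hlt | heq
  · exact mem_insert_of_mem (mem_newBefore.2 ⟨hxR, hlt⟩)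
  · exact mem_insert.2 (Or.inl (σ.symm.injective (Fin.ext heq)))

lemma sum_prefixProb_mul_card_extensions {S : Finset (Finset (Edge V) × Edge V)}
    (hS : S ⊆ criticalPairs (unrevealed g) U) :
    (∑ x ∈ S, prefixProb #(unrevealed g) #x.1) * #(extensions hmN g) =
      ∑ σ ∈ extensions hmN g, #{x ∈ S | newBefore g σ (σ.symm x.2) = x.1} := by
  have hcount := sum_card_bipartiteAbove_eq_sum_card_bipartiteBelow
    (fun x σ => newBefore g σ (σ.symm x.2) = x.1) (s := S) (t := extensions hmN g)
  simp only [bipartiteAbove, bipartiteBelow] at hcount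
  rw [sum_mul, ← hcount, Nat.cast_sum]
  refine sum_congr rfl fun x hx => ?_
  obtain ⟨⟨hF, he⟩, hcrit⟩ := mem_criticalPairs.1 (hS hx)
  exact prefixProb_mul_card_extensions hF (mem_sdiff.2 ⟨he, hcrit.notMem⟩)

lemma one_le_sum_prefixProb (hext : (extensions hmN g).Nonempty) (hU : U.Nonempty)
    (hRU : Covers (unrevealed g) U) :
    1 ≤ ∑ x ∈ criticalPairs (unrevealed g) U, prefixProb #(unrevealed g) #x.1 := by
  have hpos : (0 : ℝ) < #(extensions hmN g) := Nat.cast_pos.2 (card_pos.2 hext)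
  rw [← mul_le_mul_iff_left₀ hpos, one_mul, sum_prefixProb_mul_card_extensions subset_rfl,
    Nat.cast_le, card_eq_sum_ones]
  refine sum_le_sum fun σ _ => card_pos.2 ?_
  obtain ⟨e, he, hcrit⟩ := exists_isCritical hU hRU σ
  exact ⟨(newBefore g σ (σ.symm e), e), mem_filter.2
    ⟨mem_criticalPairs.2 ⟨⟨filter_subset _ _, he⟩, hcrit⟩, rfl⟩⟩

open scoped Classical in
lemma sum_prefixProb_mul_card_extensions_le {S : Finset (Finset (Edge V) × Edge V)}
    (hS : S ⊆ criticalPairs (unrevealed g) U) :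
    (∑ x ∈ S, prefixProb #(unrevealed g) #x.1) * #(extensions hmN g) ≤
      #{σ ∈ extensions hmN g | ∃ x ∈ S, newBefore g σ (σ.symm x.2) = x.1} := by
  rw [sum_prefixProb_mul_card_extensions hS, Nat.cast_le, card_filter]
  refine sum_le_sum fun σ _ => ?_
  split_ifs with hσ
  · refine card_le_one.2 ?_
    simp only [mem_filter]
    rintro x ⟨hx, hσx⟩ x' ⟨hx', hσx'⟩
    obtain ⟨⟨-, he⟩, hcrit⟩ := mem_criticalPairs.1 (hS hx)
    obtain ⟨⟨-, he'⟩, hcrit'⟩ := mem_criticalPairs.1 (hS hx')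
    have hsnd := eq_of_isCritical he he' (hσx ▸ hcrit) (hσx' ▸ hcrit')
    exact Prod.ext (by rw [← hσx, ← hσx', hsnd]) hsnd
  · exact (card_eq_zero.2 (filter_false_of_mem fun x hx hσx => hσ ⟨x, hx, hσx⟩)).le

end CriticalOrders

/-! ### The purchasing process -/

section Degrees

variable {V : Type*} [DecidableEq V]

lemma card_edgesAt_le_card_edgesAt_sdiff_add_one (R : Finset (Edge V)) {v y : V} (hvy : v ≠ y) :
    #(edgesAt R v) ≤ #(edgesAt (R \ edgesAt R y) v) + 1 := by
  refine (card_le_card_sdiff_add_card (t := edgesAt (R \ edgesAt R y) v)).trans ?_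
  rw [add_comm, Nat.add_le_add_iff_left, card_le_one]
  have hmem {e : Edge V} (he : e ∈ edgesAt R v \ edgesAt (R \ edgesAt R y) v) :
      e.1 = s(v, y) := by
    simp only [Finset.mem_sdiff, mem_edgesAt] at he
    exact (Sym2.mem_and_mem_iff hvy).1 (by tauto)
  exact fun e he e' he' => Subtype.ext ((hmem he).trans (hmem he').symm)

variable [Fintype V]

lemma card_edgesAt_univ (v : V) : #(edgesAt univ v) = Fintype.card V - 1 := by
  rw [← SimpleGraph.complete_graph_degree v, ← SimpleGraph.card_incidenceFinset_eq_degree,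
    ← card_map (Function.Embedding.subtype _)]
  congr 1
  ext e
  simp [edgesAt, SimpleGraph.incidenceFinset_eq_filter, and_comm]

lemma card_edgesAt_add_card_edgesAt_compl (R : Finset (Edge V)) (v : V) :
    #(edgesAt R v) + #(edgesAt Rᶜ v) = Fintype.card V - 1 := by
  rw [← card_edgesAt_univ v, edgesAt, edgesAt, ← card_union_of_disjoint
    (disjoint_filter_filter disjoint_compl_right), ← filter_union, union_compl, edgesAt]

end Degrees

section Purchases

variable {n m : ℕ} {hmN : m ≤ numEdges n} {g : Fin m → EdgeType n} {st : Strategy n} {σ : Ord n}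
  {S T : Finset (Sym2 (Fin n))} {e : EdgeType n} {v z : Fin n} {i : ℕ}

/-- The list of the edges revealed by `g`. -/
def revealed (g : Fin m → EdgeType n) : List (Sym2 (Fin n)) := List.ofFn fun i => (g i).1

/-- The set `Z_m` of vertices that are isolated in the graph revealed by `g`. -/
def untouched (g : Fin m → EdgeType n) : Finset (Fin n) := {v | deg (revealed g).toFinset v = 0}

/-- The set `Y_m` of vertices that are isolated in Builder's graph, but not in the graph revealed
by `g`. -/
def isolatedTouched (st : Strategy n) (g : Fin m → EdgeType n) : Finset (Fin n) :=
  {v | deg (buyList st (revealed g)) v = 0 ∧ 1 ≤ deg (revealed g).toFinset v}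

/-- Once the edges of `g` have been revealed, `st` purchases exactly the edges with an endpoint
that is isolated in Builder's graph. -/
def IsGreedyAfter (hmN : m ≤ numEdges n) (st : Strategy n) (g : Fin m → EdgeType n) : Prop :=
  ∀ σ : Ord n, (∀ i : Fin m, σ (Fin.castLE hmN i) = g i) →
    ∀ j : ℕ, m ≤ j → ∀ hj : j < numEdges n,
      (st (prefixList σ (j + 1)) = true ↔ ∃ w ∈ (σ ⟨j, hj⟩).1, deg (buy st σ j) w = 0)

lemma deg_mono (hST : S ⊆ T) (v : Fin n) : deg S v ≤ deg T v :=
  card_le_card (filter_subset_filter _ hST)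

lemma one_le_deg_iff : 1 ≤ deg S v ↔ ∃ e ∈ S, v ∈ e := by
  rw [deg, one_le_card]
  exact filter_nonempty_iff

lemma mem_procEdges : e.1 ∈ procEdges σ i ↔ (σ.symm e : ℕ) < i := by
  simp only [procEdges, mem_image, mem_filter_univ, Subtype.val_inj, ← σ.eq_symm_apply]
  exact exists_eq_right

lemma prefixList_succ (σ : Ord n) (hi : i < numEdges n) :
    prefixList σ (i + 1) = prefixList σ i ++ [(σ ⟨i, hi⟩).1] := by
  simp [prefixList, List.range_succ, List.filterMap_append, hi]

lemma prefixList_eq_ofFn (σ : Ord n) (hi : i ≤ numEdges n) :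
    prefixList σ i = List.ofFn fun k : Fin i => (σ (Fin.castLE hi k)).1 := by
  induction i with
  | zero => simp [prefixList]
  | succ i ih =>
    rw [prefixList_succ σ hi, ih (Nat.le_of_succ_le hi), List.ofFn_succ_last]
    rfl

lemma buyList_append_singleton (st : Strategy n) (L : List (Sym2 (Fin n))) (a : Sym2 (Fin n)) :
    buyList st (L ++ [a]) =
      if st (L ++ [a]) then insert a (buyList st L) else buyList st L := by
  have hinit : (List.range L.length).filterMap
        (fun i => if st ((L ++ [a]).take (i + 1)) then (L ++ [a])[i]? else none) =
      (List.range L.length).filterMap (fun i => if st (L.take (i + 1)) then L[i]? else none) := by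
    refine List.filterMap_congr fun i hi => ?_
    rw [List.mem_range] at hi
    rw [List.take_append_of_le_length hi, List.getElem?_append_left hi]
  have hfull : (L ++ [a]).take (L.length + 1) = L ++ [a] := List.take_of_length_le (by simp)
  rw [buyList, List.length_append, List.length_singleton, List.range_succ, List.filterMap_append,
    hinit, List.toFinset_append, ← buyList]
  split_ifs with ha <;> simp [List.filterMap, hfull, ha]

lemma buy_eq_buyList (st : Strategy n) (σ : Ord n) (i : ℕ) :
    buy st σ i = buyList st (prefixList σ i) := by
  induction i with
  | zero => simp [buy, buyList, prefixList]
  | succ i ih =>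
    by_cases hi : i < numEdges n
    · rw [prefixList_succ σ hi, buyList_append_singleton, ← ih, buy, dif_pos hi,
        prefixList_succ σ hi]
    · rw [buy, dif_neg hi, ih]
      simp [prefixList, List.range_succ, List.filterMap_append, hi]

lemma monotone_buy (st : Strategy n) (σ : Ord n) : Monotone (buy st σ) := by
  refine monotone_nat_of_le_succ fun i => ?_
  rw [buy]
  split_ifs
  exacts [subset_insert _ _, le_rfl, le_rfl]

lemma prefixList_eq_revealed (hσ : σ ∈ extensions hmN g) : prefixList σ m = revealed g := by
  simp [prefixList_eq_ofFn σ hmN, mem_extensions.1 hσ, revealed]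

lemma mem_revealed_iff : e.1 ∈ revealed g ↔ e ∉ unrevealed g := by
  simp [revealed, mem_unrevealed, List.mem_ofFn', Subtype.val_inj]

lemma deg_revealed (g : Fin m → EdgeType n) (v : Fin n) :
    deg (revealed g).toFinset v = #(edgesAt (unrevealed g)ᶜ v) := by
  rw [← card_map (Function.Embedding.subtype _), deg]
  congr 1
  ext e
  simp only [mem_filter, List.mem_toFinset, Finset.mem_map, mem_edgesAt, Finset.mem_compl,
    ← mem_revealed_iff]
  refine ⟨fun ⟨he, hve⟩ => ?_, ?_⟩
  · obtain ⟨i, rfl⟩ := (List.mem_ofFn' _ _).1 he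
    exact ⟨g i, ⟨he, hve⟩, rfl⟩
  · rintro ⟨e, he, rfl⟩
    exact he

lemma mem_untouched : v ∈ untouched g ↔ ∀ e, v ∈ e.1 → e ∈ unrevealed g := by
  rw [untouched, mem_filter_univ, deg_revealed, card_eq_zero, edgesAt, filter_eq_empty_iff]
  refine forall_congr' fun e => ?_
  rw [Finset.mem_compl, not_imp_not]

lemma disjoint_isolatedTouched_untouched (st : Strategy n) (g : Fin m → EdgeType n) :
    Disjoint (isolatedTouched st g) (untouched g) := by
  refine disjoint_filter.2 fun v _ hY hZ => ?_
  omega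

lemma one_le_deg_buy_of_notMem (hσ : σ ∈ extensions hmN g)
    (hv : v ∉ isolatedTouched st g ∪ untouched g) : 1 ≤ deg (buy st σ m) v := by
  rw [buy_eq_buyList, prefixList_eq_revealed hσ]
  simp only [isolatedTouched, untouched, mem_union, mem_filter_univ] at hv
  omega

lemma one_le_deg_procEdges_tau (hn : 2 ≤ n) (σ : Ord n) (v : Fin n) :
    1 ≤ deg (procEdges σ (tau 1 σ)) v := by
  have hnonempty : {m | ∀ v : Fin n, 1 ≤ deg (procEdges σ m) v}.Nonempty := by
    refine ⟨numEdges n, fun v => ?_⟩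
    have : Nontrivial (Fin n) := Fin.nontrivial_iff_two_le.2 hn
    obtain ⟨w, hw⟩ := exists_ne v
    let e : EdgeType n := ⟨s(v, w), hw.symm⟩
    exact one_le_deg_iff.2 ⟨e.1, mem_procEdges.2 (σ.symm e).2, Sym2.mem_mk_left v w⟩
  exact Nat.sInf_mem hnonempty v

lemma lt_tau (hn : 2 ≤ n) (hz : z ∈ untouched g) (hzi : ∀ e ∈ newBefore g σ i, z ∉ e.1) :
    i < tau 1 σ := by
  by_contra! hle
  obtain ⟨e, he, hze⟩ := one_le_deg_iff.1 (one_le_deg_procEdges_tau hn σ z)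
  obtain ⟨k, hk, rfl⟩ := mem_image.1 he
  refine hzi (σ k) (mem_newBefore.2 ⟨mem_untouched.1 hz _ hze, ?_⟩) hze
  rw [σ.symm_apply_apply]
  exact (mem_filter.1 hk).2.trans_le hle

lemma IsGreedyAfter.one_le_deg_buy (hst : IsGreedyAfter hmN st g) (hσ : σ ∈ extensions hmN g)
    (he : e ∈ unrevealed g) (hv : v ∈ e.1) (hi : σ.symm e < i) : 1 ≤ deg (buy st σ i) v := by
  refine le_trans ?_ (deg_mono (monotone_buy st σ (Nat.succ_le_of_lt hi)) v)
  have hm : m ≤ σ.symm e := (mem_unrevealed_iff_le hσ).1 he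
  by_cases hzero : deg (buy st σ (σ.symm e)) v = 0
  · have hbuy := (hst σ (mem_extensions.1 hσ) _ hm (σ.symm e).2).2 ⟨v, by simpa using hv, hzero⟩
    rw [buy, dif_pos (σ.symm e).2, if_pos hbuy]
    exact one_le_deg_iff.2 ⟨_, mem_insert_self _ _, by simpa using hv⟩
  · exact (Nat.one_le_iff_ne_zero.2 hzero).trans
      (deg_mono (monotone_buy st σ (Nat.le_succ _)) v)

lemma IsGreedyAfter.one_le_deg_buy_tau (hn : 2 ≤ n) (hst : IsGreedyAfter hmN st g)
    (hσ : σ ∈ extensions hmN g) {U : Finset (Fin n)} (hU : isolatedTouched st g ∪ untouched g ⊆ U)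
    (he : e ∈ unrevealed g) (hcrit : IsCritical U (newBefore g σ (σ.symm e)) e)
    (hz : ¬ Disjoint (untouched g) (uncovered U (newBefore g σ (σ.symm e)))) (v : Fin n) :
    1 ≤ deg (buy st σ (tau 1 σ)) v := by
  obtain ⟨z, hzZ, hzU⟩ := not_disjoint_iff.1 hz
  have htau : σ.symm e < tau 1 σ := lt_tau hn hzZ (mem_uncovered.1 hzU).2
  by_cases hv : v ∈ U
  · obtain ⟨f, hf, hvf⟩ := (isCritical_iff.1 hcrit).2 v hv
    obtain ⟨hfR, hfe⟩ := mem_newBefore.1 (insert_newBefore_subset he htau hf)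
    exact hst.one_le_deg_buy hσ hfR hvf hfe
  · have hm : m ≤ tau 1 σ := ((mem_unrevealed_iff_le hσ).1 he).trans htau.le
    exact (one_le_deg_buy_of_notMem hσ fun h => hv (hU h)).trans
      (deg_mono (monotone_buy st σ hm) v)

end Purchases

/-! ### The conditional probability -/

section CondPr

variable {n m : ℕ} {hmN : m ≤ numEdges n} {g : Fin m → EdgeType n} {st : Strategy n}
  {U : Finset (Fin n)} {ε l : ℝ}

lemma card_edgeType (n : ℕ) : Fintype.card (EdgeType n) = numEdges n := by
  rw [Sym2.card_subtype_not_diag, Fintype.card_fin, Nat.choose_two_right, numEdges]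

open scoped Classical in
lemma condPr_eq_div (hext : (extensions hmN g).Nonempty) (p : Ord n → Prop) :
    CondPr p (fun σ => ∀ i : Fin m, σ (Fin.castLE hmN i) = g i) =
      #{σ ∈ extensions hmN g | p σ} / #(extensions hmN g) := by
  have hcard : (Fintype.card (Ord n) : ℝ) ≠ 0 :=
    Nat.cast_ne_zero.2 (@Fintype.card_ne_zero _ _ hext.to_type)
  rw [CondPr, Pr, Pr, div_div_div_cancel_right₀ hcard, extensions, filter_filter]
  simp only [and_comm]
  congr!

lemma IsGreedyAfter.sum_share_untouched_le_condPr (hn : 2 ≤ n) (hg : Function.Injective g)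
    (hst : IsGreedyAfter hmN st g) (hU : isolatedTouched st g ∪ untouched g ⊆ U) :
    ∑ z ∈ untouched g, share (unrevealed g) U (fun _ => True) z ≤
      CondPr (fun σ => ∀ v : Fin n, 1 ≤ deg (buy st σ (tau 1 σ)) v)
        (fun σ => ∀ i : Fin m, σ (Fin.castLE hmN i) = g i) := by
  classical
  have hext := extensions_nonempty (card_edgeType n) hmN hg
  rw [condPr_eq_div hext, le_div_iff₀ (Nat.cast_pos.2 (card_pos.2 hext))]
  refine (mul_le_mul_of_nonneg_right (sum_share_le _ _ _) (Nat.cast_nonneg _)).trans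
    ((sum_prefixProb_mul_card_extensions_le (filter_subset _ _)).trans ?_)
  refine Nat.cast_le.2 (card_le_card fun σ hσ => ?_)
  simp only [mem_filter] at hσ ⊢
  obtain ⟨hσ, x, ⟨hpair, hZ⟩, hx⟩ := hσ
  obtain ⟨⟨-, he⟩, hcrit⟩ := mem_criticalPairs.1 hpair
  exact ⟨hσ, hst.one_le_deg_buy_tau hn hσ hU he (hx ▸ hcrit) (hx ▸ hZ)⟩

lemma half_le_card_edgesAt_unrevealed (hl : l + 2 ≤ n / 2) {v : Fin n}
    (hv : deg (revealed g).toFinset v ≤ l) : n / 2 + 1 ≤ (#(edgesAt (unrevealed g) v) : ℝ) := by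
  have hsum := card_edgesAt_add_card_edgesAt_compl (unrevealed g) v
  rw [← deg_revealed, Fintype.card_fin] at hsum
  have hn : (n : ℝ) ≤ #(edgesAt (unrevealed g) v) + deg (revealed g).toFinset v + 1 := by
    norm_cast
    omega
  linarith

lemma half_le_card_edgesAt_sdiff (hl : l + 2 ≤ n / 2) {v y : Fin n}
    (hv : deg (revealed g).toFinset v ≤ l) (hvy : v ≠ y) :
    n / 2 ≤ (#(edgesAt (unrevealed g \ edgesAt (unrevealed g) y) v) : ℝ) := by
  have hsdiff := card_edgesAt_le_card_edgesAt_sdiff_add_one (unrevealed g) hvy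
  rw [← Nat.cast_le (α := ℝ), Nat.cast_add_one] at hsdiff
  linarith [half_le_card_edgesAt_unrevealed hl hv]

lemma covers_unrevealed (hl : l + 2 ≤ n / 2) (hdeg : ∀ v, deg (revealed g).toFinset v ≤ l)
    (U : Finset (Fin n)) : Covers (unrevealed g) U := fun v _ => by
  have hpos : (0 : ℝ) < #(edgesAt (unrevealed g) v) :=
    lt_of_lt_of_le (by positivity) (half_le_card_edgesAt_unrevealed hl (hdeg v))
  exact (card_pos.1 (Nat.cast_pos.1 hpos)).imp fun _ => mem_edgesAt.1

lemma sqrt_le_div_three (hn : 9 ≤ n) : √(n : ℝ) ≤ n / 3 := by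
  have hn' : (9 : ℝ) ≤ n := mod_cast hn
  exact Real.sqrt_le_iff.2 ⟨by positivity, by nlinarith⟩

lemma mul_sqrt_div_five_add_two_le (hn : 9 ≤ n) (hε : ε ≤ 1) : ε * √n / 5 + 2 ≤ (n : ℝ) / 2 := by
  have hn' : (9 : ℝ) ≤ n := mod_cast hn
  linarith [sqrt_le_div_three hn, mul_le_of_le_one_left (Real.sqrt_nonneg n) hε]

lemma one_sub_mul_share_unrevealed_sub_le (hn : 9 ≤ n) (hε : 0 < ε) (hε' : ε ≤ 1)
    (hdeg : ∀ v, deg (revealed g).toFinset v ≤ ε * √n / 5) {y z : Fin n} (hy : y ∈ U)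
    (hzU : z ∈ U) (hz : z ∈ untouched g) :
    (1 - ε) * share (unrevealed g) U (fun _ => True) y - ε / n ≤
      share (unrevealed g) U (fun _ => True) z := by
  have hpos : (0 : ℝ) < n / 2 := half_pos (Nat.cast_pos.2 (by omega))
  have hsq : √(n : ℝ) ^ 2 = n := Real.sq_sqrt n.cast_nonneg
  have hl : ε * √n / 5 + 2 ≤ (n : ℝ) / 2 := mul_sqrt_div_five_add_two_le hn hε'
  have herr : 6 * (ε * √n / 5) ^ 2 / (ε * (n / 2) ^ 2) ≤ ε / n := by
    rw [div_pow, mul_pow, hsq]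
    field_simp
    norm_num
  refine (sub_le_sub_left herr _).trans
    (one_sub_mul_share_sub_le_share hy hzU (mem_untouched.1 hz) hε hpos ?_ ?_
      (fun v hv => half_le_card_edgesAt_sdiff hl (hdeg v) hv) ?_)
  · linarith [mul_le_mul_of_nonneg_left (sqrt_le_div_three hn) hε.le, mul_pos hε hpos]
  · exact deg_revealed g y ▸ hdeg y
  · linarith [half_le_card_edgesAt_unrevealed hl (hdeg y)]

lemma mul_card_div_card_le_sum {ι : Type*} {U Z : Finset ι} {w : ι → ℝ} {δ : ℝ}
    (hU : U.Nonempty) (hε : ε ≤ 1) (hδ : #U * δ ≤ ε) (hsum : 1 ≤ ∑ u ∈ U, w u)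
    (hcmp : ∀ u ∈ U, ∀ z ∈ Z, (1 - ε) * w u - δ ≤ w z) :
    (1 - 2 * ε) * #Z / #U ≤ ∑ z ∈ Z, w z := by
  have hpos : (0 : ℝ) < #U := Nat.cast_pos.2 (card_pos.2 hU)
  rw [mul_div_right_comm, mul_comm, ← nsmul_eq_mul]
  refine card_nsmul_le_sum _ _ _ fun z hz => (div_le_iff₀ hpos).2 ?_
  calc 1 - 2 * ε ≤ (1 - ε) * ∑ u ∈ U, w u - #U * δ := by
        linarith [mul_le_mul_of_nonneg_left hsum (sub_nonneg.2 hε)]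
    _ = ∑ u ∈ U, ((1 - ε) * w u - δ) := by
        rw [sum_sub_distrib, ← mul_sum, sum_const, nsmul_eq_mul]
    _ ≤ w z * #U := by
        rw [mul_comm, ← nsmul_eq_mul]
        exact sum_le_card_nsmul _ _ _ fun u hu => hcmp u hu z hz

theorem one_sub_two_mul_card_div_le_condPr (hn : 9 ≤ n) (hε : 0 < ε) (hε' : ε ≤ 1)
    (hg : Function.Injective g) (hne : (isolatedTouched st g ∪ untouched g).Nonempty)
    (hdeg : ∀ v, deg (revealed g).toFinset v ≤ ε * √n / 5) (hst : IsGreedyAfter hmN st g) :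
    (1 - 2 * ε) * #(untouched g) / (#(isolatedTouched st g) + #(untouched g)) ≤
      CondPr (fun σ => ∀ v : Fin n, 1 ≤ deg (buy st σ (tau 1 σ)) v)
        (fun σ => ∀ i : Fin m, σ (Fin.castLE hmN i) = g i) := by
  rw [← Nat.cast_add, ← card_union_of_disjoint (disjoint_isolatedTouched_untouched st g)]
  refine (mul_card_div_card_le_sum (δ := ε / n) hne hε' ?_ ?_ ?_).trans
    (hst.sum_share_untouched_le_condPr (by omega) hg subset_rfl)
  · rw [mul_div_left_comm]
    refine mul_le_of_le_one_right hε.le ((div_le_one (by positivity)).2 ?_)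
    exact_mod_cast (card_le_univ _).trans_eq (Fintype.card_fin n)
  · rw [sum_share]
    exact one_le_sum_prefixProb (extensions_nonempty (card_edgeType n) hmN hg) hne
      (covers_unrevealed (mul_sqrt_div_five_add_two_le hn hε') hdeg _)
  · exact fun y hy z hz => one_sub_mul_share_unrevealed_sub_le hn hε hε' hdeg hy
      (mem_union_right _ hz) hz

lemma isLittleO_ten_mul_log_sqrt :
    (fun n : ℕ => 10 * Real.log n) =o[atTop] fun n => √(n : ℝ) := by
  simp only [Real.sqrt_eq_rpow]
  exact ((isLittleO_log_rpow_atTop one_half_pos).comp_tendsto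
    tendsto_natCast_atTop_atTop).const_mul_left 10

theorem no_isolated_vertex_cond_prob_general (d : ℕ → ℝ) (hd : d =o[atTop] fun n => √(n : ℝ))
    (η : ℝ) (hη : 0 < η) :
    ∃ n₀ : ℕ, ∀ n : ℕ, n₀ ≤ n → ∀ m : ℕ, ∀ hmN : m ≤ numEdges n,
      ∀ st : Strategy n, ∀ g : Fin m → EdgeType n, Function.Injective g →
        (isolatedTouched st g ∪ untouched g).Nonempty →
        (∀ v : Fin n, (deg (revealed g).toFinset v : ℝ) ≤ d n) →
        IsGreedyAfter hmN st g →
        (1 - η) * #(untouched g) / (#(isolatedTouched st g) + #(untouched g)) ≤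
          CondPr (fun σ => ∀ v : Fin n, 1 ≤ deg (buy st σ (tau 1 σ)) v)
            (fun σ => ∀ i : Fin m, σ (Fin.castLE hmN i) = g i) := by
  let ε := min (η / 2) 1
  have hε : 0 < ε := lt_min (half_pos hη) one_pos
  obtain ⟨n₀, hn₀⟩ := eventually_atTop.1
    ((hd.bound (div_pos hε (by norm_num : (0 : ℝ) < 5))).and (eventually_ge_atTop 9))
  refine ⟨n₀, fun n hn m hmN st g hg hne hdeg hst => ?_⟩
  obtain ⟨hdn, hn⟩ := hn₀ n hn
  have hdn : d n ≤ ε * √n / 5 := by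
    rw [Real.norm_of_nonneg (Real.sqrt_nonneg _), div_mul_eq_mul_div] at hdn
    exact (Real.le_norm_self _).trans hdn
  refine le_trans ?_ (one_sub_two_mul_card_div_le_condPr hn hε (min_le_right _ _) hg hne
    (fun v => (hdeg v).trans hdn) hst)
  gcongr
  linarith [min_le_left (η / 2) 1]

end CondPr

/-- Let `C > 0`. For every `η > 0` there is `n₀` such that for all
`n ≥ n₀`, every `m ≤ Cn`, every deterministic online strategy, and every realization
`g` of the first `m` edges with `Y_m ∪ Z_m ≠ ∅` and `Δ(G_{n,m}) ≤ 10·log n`: if from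
step `m+1` on the strategy purchases `e_j` if and only if at least one endpoint of
`e_j` is isolated in `B_{j−1}`, then the conditional probability (given `e_1, …, e_m`)
that `B_{τ_1}` has no isolated vertex is at least `(1 − η)·|Z_m| / (|Y_m| + |Z_m|)`. -/
theorem no_isolated_vertex_cond_prob (C : ℝ) (hC : 0 < C) (η : ℝ) (hη : 0 < η) :
    ∃ n₀ : ℕ, ∀ n : ℕ, n₀ ≤ n → ∀ m : ℕ, (m : ℝ) ≤ C * n → ∀ hmN : m ≤ numEdges n,
      ∀ st : Strategy n, ∀ g : Fin m → EdgeType n, Function.Injective g →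
        letI L : List (Sym2 (Fin n)) := List.ofFn (fun i : Fin m => ((g i : EdgeType n) : Sym2 (Fin n)))
        letI Ym : Finset (Fin n) := (Finset.univ : Finset (Fin n)).filter
          (fun v => deg (buyList st L) v = 0 ∧ 1 ≤ deg L.toFinset v)
        letI Zm : Finset (Fin n) := (Finset.univ : Finset (Fin n)).filter
          (fun v => deg L.toFinset v = 0)
        (Ym ∪ Zm).Nonempty →
        (∀ v : Fin n, (deg L.toFinset v : ℝ) ≤ 10 * Real.log n) →
        (∀ σ : Ord n, (∀ i : Fin m, σ (Fin.castLE hmN i) = g i) →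
          ∀ j : ℕ, m ≤ j → ∀ hj : j < numEdges n,
            (st (prefixList σ (j + 1)) = true ↔
              ∃ w ∈ ((σ ⟨j, hj⟩ : EdgeType n) : Sym2 (Fin n)), deg (buy st σ j) w = 0)) →
        (1 - η) * (Zm.card : ℝ) / ((Ym.card : ℝ) + (Zm.card : ℝ)) ≤
          CondPr (fun σ => ∀ v : Fin n, 1 ≤ deg (buy st σ (tau 1 σ)) v)
            (fun σ => ∀ i : Fin m, σ (Fin.castLE hmN i) = g i) := by
  obtain ⟨n₀, hn₀⟩ :=
    no_isolated_vertex_cond_prob_general _ isLittleO_ten_mul_log_sqrt η hη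
  exact ⟨n₀, fun n hn m _ => hn₀ n hn m⟩

end RGP
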